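/- arXiv:1005.5716 — 4 statements merged into one kernel-verified Lean document; each statement's English description precedes it below -/
import Mathlib

section
/- Let 0 < p'(n) ≤ p(n) ≤ 1 with n²p'(n) → ∞, let ε > 0, and let P be a monotone increasing graph property. If G(n,p') asymptotically almost surely has global resilience at least (1/2 − ε/2)·n²p'/2 with respect to P, then G(n,p) asymptotically almost surely has global resilience at least (1/2 − ε)·n²p/2 with respect to P. -/
/-!
Put `q = p' / p`: keeping each edge of `G ∼ G(n, p)` with probability `q` yields `G' ∼ G(n, p')`.
If `G` fails to have resilience `r`, some `H ≤ G` missing fewer than `r` edges of `G` lacks the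
property. By monotonicity so does `G' ⊓ H`, which misses less than `q * r` edges of `G'` in
expectation. Hence, by Markov's inequality, `G'` fails to have resilience `r'` with conditional
probability at least `1 - q * r / r'`. For the thresholds at hand this is a positive constant (unless
`r' ≤ 0`, when failure is impossible), so if failure is unlikely at density `p'`, it is unlikely at
density `p`.
-/

open Filter Topology Classical

/-- Probability that a graph drawn from the binomial random graph `G(n,p)` (each pair of
vertices forming an edge independently with probability `p`) satisfies the predicate `P`. -/
noncomputable def gnpProb (V : Type) [Fintype V] [DecidableEq V] (p : ℝ)
    (P : SimpleGraph V → Prop) : ℝ :=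
  ∑ G : SimpleGraph V,
    if P G then p ^ G.edgeSet.ncard *
      (1 - p) ^ ((Fintype.card V).choose 2 - G.edgeSet.ncard) else 0

/-- `G` contains a cycle of length `t`. -/
def HasCycleLength {V : Type} (G : SimpleGraph V) (t : ℕ) : Prop :=
  ∃ (v : V) (w : G.Walk v v), w.IsCycle ∧ w.length = t

/-- A graph `G` has global resilience at least `r` with respect to `P` if removing
fewer than `r` edges from `G` always leaves a graph having `P`. -/
def HasGlobalResilienceAtLeast {V : Type} (G : SimpleGraph V)
    (P : SimpleGraph V → Prop) (r : ℝ) : Prop :=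
  ∀ G' : SimpleGraph V, G' ≤ G →
    ((G.edgeSet.ncard : ℝ) - (G'.edgeSet.ncard : ℝ) < r) → P G'

section BinomialSubset

variable {α : Type*} {p : ℝ} {a : α} {S : Finset α} {f g : Finset α → ℝ}

/-- The expectation of `f T`, where `T` is the binomial random subset of `S` containing each element
independently with probability `p`. For `T ⊆ S` the exponent `#S - #T` is the number of elements
left out. -/
noncomputable def binomialSubsetMean (p : ℝ) (S : Finset α) (f : Finset α → ℝ) : ℝ :=
  ∑ T ∈ S.powerset, p ^ T.card * (1 - p) ^ (S.card - T.card) * f T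

lemma binomialSubsetMean_const (p : ℝ) (S : Finset α) (c : ℝ) :
    binomialSubsetMean p S (fun _ => c) = c := by
  simp [binomialSubsetMean, ← Finset.sum_mul, Finset.sum_pow_mul_eq_add_pow]

lemma binomialSubsetMean_add (p : ℝ) (S : Finset α) (f g : Finset α → ℝ) :
    binomialSubsetMean p S (fun T => f T + g T) =
      binomialSubsetMean p S f + binomialSubsetMean p S g := by
  simp only [binomialSubsetMean, mul_add, Finset.sum_add_distrib]

lemma binomialSubsetMean_const_mul (p : ℝ) (S : Finset α) (c : ℝ) (f : Finset α → ℝ) :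
    binomialSubsetMean p S (fun T => c * f T) = c * binomialSubsetMean p S f := by
  simp only [binomialSubsetMean, mul_left_comm _ c, Finset.mul_sum]

lemma binomialSubsetMean_mono (hp₀ : 0 ≤ p) (hp₁ : p ≤ 1) (hfg : ∀ T ⊆ S, f T ≤ g T) :
    binomialSubsetMean p S f ≤ binomialSubsetMean p S g := by
  have : 0 ≤ 1 - p := sub_nonneg.2 hp₁
  exact Finset.sum_le_sum fun T hT =>
    mul_le_mul_of_nonneg_left (hfg T (Finset.mem_powerset.1 hT)) (by positivity)

lemma binomialSubsetMean_congr (hfg : ∀ T ⊆ S, f T = g T) :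
    binomialSubsetMean p S f = binomialSubsetMean p S g :=
  Finset.sum_congr rfl fun T hT => by rw [hfg T (Finset.mem_powerset.1 hT)]

lemma binomialSubsetMean_insert [DecidableEq α] (p : ℝ) (ha : a ∉ S) (f : Finset α → ℝ) :
    binomialSubsetMean p (insert a S) f =
      p * binomialSubsetMean p S (fun T => f (insert a T)) +
        (1 - p) * binomialSubsetMean p S f := by
  rw [binomialSubsetMean, Finset.sum_powerset_insert ha, add_comm, binomialSubsetMean,
    binomialSubsetMean, Finset.mul_sum, Finset.mul_sum]
  congr 1 <;> refine Finset.sum_congr rfl fun T hT => ?_ <;> rw [Finset.mem_powerset] at hT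
  · rw [Finset.card_insert_of_notMem ha, Finset.card_insert_of_notMem (mt (@hT a) ha),
      Nat.add_sub_add_right]
    ring
  · rw [Finset.card_insert_of_notMem ha, Nat.sub_add_comm (Finset.card_le_card hT)]
    ring

lemma binomialSubsetMean_sum (p : ℝ) (S : Finset α) (w : α → ℝ) :
    binomialSubsetMean p S (fun T => ∑ x ∈ T, w x) = p * ∑ x ∈ S, w x := by
  induction S using Finset.induction_on with
  | empty => simp [binomialSubsetMean]
  | insert a S ha ih =>
    have hsum : ∀ T ⊆ S, ∑ x ∈ insert a T, w x = w a + ∑ x ∈ T, w x := fun T hT =>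
      Finset.sum_insert (mt (@hT a) ha)
    rw [binomialSubsetMean_insert p ha, binomialSubsetMean_congr hsum, binomialSubsetMean_add,
      binomialSubsetMean_const, ih, Finset.sum_insert ha]
    ring

lemma binomialSubsetMean_card_sdiff [DecidableEq α] (p : ℝ) (S A : Finset α) :
    binomialSubsetMean p S (fun T => ((T \ A).card : ℝ)) = p * (S \ A).card := by
  have hcard (T : Finset α) : ((T \ A).card : ℝ) = ∑ x ∈ T, if x ∉ A then 1 else 0 := by
    rw [Finset.sum_boole, Finset.sdiff_eq_filter]
  simp only [hcard, binomialSubsetMean_sum]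

lemma binomialSubsetMean_binomialSubsetMean (p q : ℝ) (E : Finset α) (f : Finset α → ℝ) :
    binomialSubsetMean p E (fun S => binomialSubsetMean q S f) =
      binomialSubsetMean (p * q) E f := by
  induction E using Finset.induction_on generalizing f with
  | empty => simp [binomialSubsetMean]
  | insert a E ha ih =>
    have hinsert : ∀ S ⊆ E, binomialSubsetMean q (insert a S) f =
        q * binomialSubsetMean q S (fun T => f (insert a T)) + (1 - q) * binomialSubsetMean q S f :=
      fun S hS => binomialSubsetMean_insert q (mt (@hS a) ha) f
    rw [binomialSubsetMean_insert p ha, binomialSubsetMean_congr hinsert, binomialSubsetMean_add,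
      binomialSubsetMean_const_mul, binomialSubsetMean_const_mul, ih, ih,
      binomialSubsetMean_insert (p * q) ha]
    ring

lemma sub_mul_card_sdiff_le_binomialSubsetMean [DecidableEq α] {A : Finset α} {t : ℝ} (hp₀ : 0 ≤ p)
    (hp₁ : p ≤ 1) (hf : ∀ T ⊆ S, t - (T \ A).card ≤ f T) :
    t - p * (S \ A).card ≤ binomialSubsetMean p S f := by
  have hmean : binomialSubsetMean p S (fun T => t + -1 * ((T \ A).card : ℝ)) =
      t - p * (S \ A).card := by
    rw [binomialSubsetMean_add, binomialSubsetMean_const, binomialSubsetMean_const_mul,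
      binomialSubsetMean_card_sdiff, neg_one_mul, sub_eq_add_neg]
  rw [← hmean]
  exact binomialSubsetMean_mono hp₀ hp₁ fun T hT => by linarith [hf T hT]

end BinomialSubset

section BinomialRandomGraph

variable {V : Type} [Fintype V] [DecidableEq V]

lemma edgeSet_fromEdgeSet_of_subset_edgeFinset_top {S : Finset (Sym2 V)}
    (hS : S ⊆ (⊤ : SimpleGraph V).edgeFinset) :
    (SimpleGraph.fromEdgeSet (S : Set (Sym2 V))).edgeSet = S := by
  rw [SimpleGraph.edgeSet_fromEdgeSet, sdiff_eq_left, Set.disjoint_left]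
  exact fun e he => SimpleGraph.not_isDiag_of_mem_edgeFinset (hS he)

lemma gnpProb_eq_binomialSubsetMean (p : ℝ) (Q : SimpleGraph V → Prop) :
    gnpProb V p Q = binomialSubsetMean p (⊤ : SimpleGraph V).edgeFinset
      (fun S => {G | Q G}.indicator 1 (SimpleGraph.fromEdgeSet S)) := by
  unfold gnpProb binomialSubsetMean
  refine Finset.sum_bij (fun G _ => G.edgeFinset) ?_ ?_ ?_ ?_
  · exact fun G _ => Finset.mem_powerset.2 (SimpleGraph.edgeFinset_mono le_top)
  · exact fun G _ H _ h => SimpleGraph.edgeFinset_inj.1 h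
  · intro S hS
    refine ⟨SimpleGraph.fromEdgeSet S, Finset.mem_univ _, Finset.coe_injective ?_⟩
    rw [SimpleGraph.coe_edgeFinset,
      edgeSet_fromEdgeSet_of_subset_edgeFinset_top (Finset.mem_powerset.1 hS)]
  · intro G _
    have hcard : G.edgeSet.ncard = G.edgeFinset.card := Set.ncard_eq_toFinset_card' _
    simp only [hcard, SimpleGraph.coe_edgeFinset, SimpleGraph.fromEdgeSet_edgeSet,
      SimpleGraph.card_edgeFinset_top_eq_card_choose_two, Set.indicator_apply, Set.mem_ofPred_eq,
      Pi.one_apply, mul_ite, mul_one, mul_zero]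

lemma gnpProb_nonneg {p : ℝ} (hp₀ : 0 ≤ p) (hp₁ : p ≤ 1) (Q : SimpleGraph V → Prop) :
    0 ≤ gnpProb V p Q := by
  have : 0 ≤ 1 - p := sub_nonneg.2 hp₁
  exact Finset.sum_nonneg fun G _ => by split_ifs <;> positivity

lemma gnpProb_add_gnpProb_not (p : ℝ) (Q : SimpleGraph V → Prop) :
    gnpProb V p Q + gnpProb V p (fun G => ¬ Q G) = 1 := by
  rw [gnpProb_eq_binomialSubsetMean, gnpProb_eq_binomialSubsetMean, ← binomialSubsetMean_add]
  refine (binomialSubsetMean_congr fun S _ => ?_).trans (binomialSubsetMean_const p _ 1)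
  by_cases h : Q (SimpleGraph.fromEdgeSet S) <;> simp [h]

end BinomialRandomGraph

lemma tendsto_gnpProb_one_iff {ι : Type*} {l : Filter ι} {V : ι → Type} [∀ i, Fintype (V i)]
    [∀ i, DecidableEq (V i)] {p : ι → ℝ} {Q : ∀ i, SimpleGraph (V i) → Prop} :
    Tendsto (fun i => gnpProb (V i) (p i) (Q i)) l (𝓝 1) ↔
      Tendsto (fun i => gnpProb (V i) (p i) (fun G => ¬ Q i G)) l (𝓝 0) := by
  have hnot (i : ι) : gnpProb (V i) (p i) (Q i) = 1 - gnpProb (V i) (p i) (fun G => ¬ Q i G) :=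
    eq_sub_of_add_eq (gnpProb_add_gnpProb_not (p i) (Q i))
  simp only [hnot]
  constructor <;> intro h <;> simpa using h.const_sub 1

section Resilience

variable {V : Type} {P : SimpleGraph V → Prop} {G H : SimpleGraph V} {r : ℝ}

lemma not_hasGlobalResilienceAtLeast_iff :
    ¬ HasGlobalResilienceAtLeast G P r ↔
      ∃ H ≤ G, (G.edgeSet.ncard : ℝ) - H.edgeSet.ncard < r ∧ ¬ P H := by
  simp only [HasGlobalResilienceAtLeast, not_forall, exists_prop]

variable [Finite V]

lemma ncard_edgeSet_sdiff_of_le (h : H ≤ G) :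
    ((G.edgeSet \ H.edgeSet).ncard : ℝ) = G.edgeSet.ncard - H.edgeSet.ncard := by
  have hsub := SimpleGraph.edgeSet_mono h
  rw [Set.ncard_sdiff hsub, Nat.cast_sub (Set.ncard_le_ncard hsub)]

lemma pos_of_not_hasGlobalResilienceAtLeast (h : ¬ HasGlobalResilienceAtLeast G P r) : 0 < r := by
  obtain ⟨H, hHG, hlt, -⟩ := not_hasGlobalResilienceAtLeast_iff.1 h
  rw [← ncard_edgeSet_sdiff_of_le hHG] at hlt
  exact (Nat.cast_nonneg _).trans_lt hlt

lemma not_hasGlobalResilienceAtLeast_of_ncard_sdiff_lt (hP : Monotone P) (hH : ¬ P H)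
    (hlt : ((G.edgeSet \ H.edgeSet).ncard : ℝ) < r) : ¬ HasGlobalResilienceAtLeast G P r := by
  refine not_hasGlobalResilienceAtLeast_iff.2 ⟨G ⊓ H, inf_le_left, ?_, mt (hP inf_le_right) hH⟩
  rwa [← ncard_edgeSet_sdiff_of_le inf_le_left, SimpleGraph.edgeSet_inf, Set.sdiff_self_inter]

lemma mul_indicator_not_resilient_nonneg (P : SimpleGraph V → Prop) (r : ℝ) (G : SimpleGraph V) :
    0 ≤ r * {G | ¬ HasGlobalResilienceAtLeast G P r}.indicator 1 G := by
  by_cases h : HasGlobalResilienceAtLeast G P r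
  · simp [h]
  · simpa [h] using (pos_of_not_hasGlobalResilienceAtLeast h).le

-- The pointwise inequality behind Markov's; multiplying by `r` lets `r` have any sign.
lemma sub_ncard_sdiff_le_mul_indicator_not_resilient (hP : Monotone P) (hH : ¬ P H) (r : ℝ)
    (G : SimpleGraph V) :
    r - (G.edgeSet \ H.edgeSet).ncard ≤
      r * {G | ¬ HasGlobalResilienceAtLeast G P r}.indicator 1 G := by
  by_cases h : HasGlobalResilienceAtLeast G P r
  · have hle : r ≤ (G.edgeSet \ H.edgeSet).ncard := by
      contrapose! h
      exact not_hasGlobalResilienceAtLeast_of_ncard_sdiff_lt hP hH h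
    simpa [h] using hle
  · simp [h]

end Resilience

section Sparsification

variable {V : Type} [Fintype V] [DecidableEq V] {P : SimpleGraph V → Prop}

lemma sub_mul_ncard_sdiff_le_binomialSubsetMean_not_resilient {q : ℝ} (hq₀ : 0 ≤ q) (hq₁ : q ≤ 1)
    (hP : Monotone P) {H : SimpleGraph V} (hH : ¬ P H) {S : Finset (Sym2 V)}
    (hS : S ⊆ (⊤ : SimpleGraph V).edgeFinset) (r : ℝ) :
    r - q * ((SimpleGraph.fromEdgeSet (S : Set (Sym2 V))).edgeSet \ H.edgeSet).ncard ≤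
      binomialSubsetMean q S fun T =>
        r * {G | ¬ HasGlobalResilienceAtLeast G P r}.indicator 1 (SimpleGraph.fromEdgeSet T) := by
  have hcard : ∀ T ⊆ S,
      ((SimpleGraph.fromEdgeSet (T : Set (Sym2 V))).edgeSet \ H.edgeSet).ncard =
        (T \ H.edgeFinset).card := fun T hT => by
    rw [edgeSet_fromEdgeSet_of_subset_edgeFinset_top (hT.trans hS), ← SimpleGraph.coe_edgeFinset H,
      ← Finset.coe_sdiff, Set.ncard_coe_finset]
  rw [hcard S subset_rfl]
  refine sub_mul_card_sdiff_le_binomialSubsetMean hq₀ hq₁ fun T hT => ?_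
  rw [← hcard T hT]
  exact sub_ncard_sdiff_le_mul_indicator_not_resilient hP hH r _

lemma sub_mul_gnpProb_not_resilient_le {p q : ℝ} (hp₀ : 0 ≤ p) (hp₁ : p ≤ 1) (hq₀ : 0 ≤ q)
    (hq₁ : q ≤ 1) (hP : Monotone P) (r r' : ℝ) :
    (r' - q * r) * gnpProb V p (fun G => ¬ HasGlobalResilienceAtLeast G P r) ≤
      r' * gnpProb V (p * q) (fun G => ¬ HasGlobalResilienceAtLeast G P r') := by
  simp only [gnpProb_eq_binomialSubsetMean, ← binomialSubsetMean_binomialSubsetMean,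
    ← binomialSubsetMean_const_mul]
  refine binomialSubsetMean_mono hp₀ hp₁ fun S hS => ?_
  by_cases hres : HasGlobalResilienceAtLeast (SimpleGraph.fromEdgeSet S) P r
  · rw [Set.indicator_of_notMem (not_not.2 hres), mul_zero]
    refine (binomialSubsetMean_const q S 0).ge.trans (binomialSubsetMean_mono hq₀ hq₁ fun T _ => ?_)
    exact mul_indicator_not_resilient_nonneg P r' _
  · obtain ⟨H, hle, hlt, hH⟩ := not_hasGlobalResilienceAtLeast_iff.1 hres
    rw [← ncard_edgeSet_sdiff_of_le hle] at hlt
    rw [Set.indicator_of_mem hres, Pi.one_apply, mul_one]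
    exact (sub_le_sub_left (mul_le_mul_of_nonneg_left hlt.le hq₀) r').trans
      (sub_mul_ncard_sdiff_le_binomialSubsetMean_not_resilient hq₀ hq₁ hP hH hS r')

end Sparsification

theorem resilience_monotone_general {ι : Type*} {l : Filter ι} {V : ι → Type} [∀ i, Fintype (V i)]
    [∀ i, DecidableEq (V i)] {p' p N : ι → ℝ} (hpos : ∀ i, 0 < p' i) (hle : ∀ i, p' i ≤ p i)
    (hone : ∀ i, p i ≤ 1) (hN : ∀ᶠ i in l, 0 < N i) {a b : ℝ} (hab : a < b)
    {P : ∀ i, SimpleGraph (V i) → Prop} (hP : ∀ i, Monotone (P i))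
    (haas : Tendsto (fun i => gnpProb (V i) (p' i) fun G =>
      HasGlobalResilienceAtLeast G (P i) (b * (N i * p' i))) l (𝓝 1)) :
    Tendsto (fun i => gnpProb (V i) (p i) fun G =>
      HasGlobalResilienceAtLeast G (P i) (a * (N i * p i))) l (𝓝 1) := by
  rw [tendsto_gnpProb_one_iff] at haas ⊢
  have hp (i : ι) : 0 < p i := (hpos i).trans_le (hle i)
  have hlim := haas.const_mul (b / (b - a))
  rw [mul_zero] at hlim
  refine squeeze_zero' (.of_forall fun i => gnpProb_nonneg (hp i).le (hone i) _) ?_ hlim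
  filter_upwards [hN] with i hNi
  have hbound := sub_mul_gnpProb_not_resilient_le (hp i).le (hone i)
    (div_nonneg (hpos i).le (hp i).le) ((div_le_one (hp i)).2 (hle i)) (hP i)
    (a * (N i * p i)) (b * (N i * p' i))
  have hgap : b * (N i * p' i) - p' i / p i * (a * (N i * p i)) = N i * p' i * (b - a) := by
    have := (hp i).ne'
    field_simp
  rw [mul_div_cancel₀ _ (hp i).ne', hgap] at hbound
  rw [div_mul_eq_mul_div, le_div_iff₀' (sub_pos.2 hab)]
  exact le_of_mul_le_mul_left (by linarith) (mul_pos hNi (hpos i))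

/-- If 0 < p'(n) ≤ p(n) ≤ 1, n²p'(n) → ∞, ε > 0 and P is a monotone increasing graph
property, then a.a.s. global resilience at least (1/2 − ε/2)·n²p'/2 of G(n,p') with respect
to P implies a.a.s. global resilience at least (1/2 − ε)·n²p/2 of G(n,p) with respect to P. -/
theorem resilience_monotone (p' p : ℕ → ℝ)
    (hpos : ∀ n : ℕ, 0 < p' n) (hle : ∀ n : ℕ, p' n ≤ p n) (hone : ∀ n : ℕ, p n ≤ 1)
    (hinf : Filter.Tendsto (fun n : ℕ => (n : ℝ)^2 * p' n) Filter.atTop Filter.atTop)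
    (ε : ℝ) (hε : 0 < ε)
    (P : (n : ℕ) → SimpleGraph (Fin n) → Prop)
    (hmono : ∀ (n : ℕ) (G H : SimpleGraph (Fin n)), G ≤ H → P n G → P n H)
    (haas : Filter.Tendsto
      (fun n : ℕ => gnpProb (Fin n) (p' n) (fun G =>
        HasGlobalResilienceAtLeast G (P n) ((1/2 - ε/2) * ((n : ℝ)^2 * p' n / 2))))
      Filter.atTop (nhds 1)) :
    Filter.Tendsto
      (fun n : ℕ => gnpProb (Fin n) (p n) (fun G =>
        HasGlobalResilienceAtLeast G (P n) ((1/2 - ε) * ((n : ℝ)^2 * p n / 2))))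
      Filter.atTop (nhds 1) := by
  have hN : ∀ᶠ n : ℕ in atTop, (0 : ℝ) < (n : ℝ) ^ 2 / 2 :=
    (eventually_gt_atTop 0).mono fun n hn => by positivity
  simpa only [div_mul_eq_mul_div] using resilience_monotone_general hpos hle hone hN
    (a := 1 / 2 - ε) (b := 1 / 2 - ε / 2) (by linarith) hmono
    (by simpa only [div_mul_eq_mul_div] using haas)
end

section
/- For every ε₀ > 0 there exists an integer n₀ such that for all ε' ≥ ε₀ and n ≥ n₀, every n-vertex graph G' with at least (1/2 + ε')·(n²−n)/2 edges contains, for every integer l with 0 ≤ l ≤ (ε'/16)n and every labeling of its vertex set with ℤ_n, at least (ε'/16)⁸ n⁴ l-shortcuts. -/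
/-!
Fix `i₁ = x` and `i₂ = y`. Then `i₃` has to be a neighbour of `x` with `i₃ + 1` a neighbour of
`y + 1`, and `i₄` a neighbour of `x + 1` with `i₄ + l + 1` a neighbour of `y`. So there are at least
`d(x) + d(y + 1) - n` choices for `i₃` and `d(x + 1) + d(y) - n` for `i₄`, and if `y` follows `x` at
clockwise distance `s`, the cyclic order (type (i) or type (ii), depending on which of `i₃`, `i₄`
comes first) forbids only `s + 3` and `s + 2l + 6` of them. The cyclic order also keeps the edges
of the shortcut off the Hamilton cycle.

It remains to find many pairs `(x, y)` at distance at most `εn/4` for which both degree sums are at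
least `(1 + 3ε/4) n`. The average of `d(x) + d(x + 1)` is at least `(1 + 2ε)(n - 1)`, so at least
`2εn/5` vertices have `d(x) + d(x + 1) ≥ (1 + ε) n`. By pigeonhole, `ε³n/64` of them agree in
position and in degree up to `εn/4`. For two such vertices `x`, `y`, replacing `d(x)` by `d(y)` or
conversely loses at most `εn/4`, so both mixed sums are large. Finally, a shortcut comes from at
most `8⁴` quadruples, and the powers of two fit: `2⁻¹² · 2⁻² · 2⁻⁴ · 2⁻¹² ≥ 16⁻⁸`.
-/

open Filter Topology Classical

/-- The clockwise arc length from `a` to `b` on the discrete circle `ZMod n`. -/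
def arcDist {n : ℕ} (a b : ZMod n) : ℕ := (b - a).val

/-- The points of `L` are all distinct and lie in this clockwise cyclic order
on the discrete circle `ZMod n` (the consecutive clockwise arcs, including the
wrap-around arc, sum to exactly `n`). -/
def InClockwiseOrder {n : ℕ} (L : List (ZMod n)) : Prop :=
  L.Nodup ∧ ((L.zip (L.rotate 1)).map fun q => arcDist q.1 q.2).sum = n

/-- The Hamilton cycle `C_n` on vertex set `ZMod n`, with edges `{i, i+1}`. -/
def cycleGraph (n : ℕ) : SimpleGraph (ZMod n) :=
  SimpleGraph.fromEdgeSet {e | ∃ i : ZMod n, e = s(i, i + 1)}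

/-- The four edges of the `l`-shortcut determined by `i₁ i₂ i₃ i₄`. -/
def shortcutEdges {n : ℕ} (l : ℕ) (i₁ i₂ i₃ i₄ : ZMod n) : Finset (Sym2 (ZMod n)) :=
  {s(i₁, i₃), s(i₁ + 1, i₄), s(i₂, i₄ + (l : ZMod n) + 1), s(i₂ + 1, i₃ + 1)}

/-- `(i₁, i₂, i₃, i₄)` determines an `l`-shortcut (of type (i) or type (ii)) in `K_n ∖ C_n`. -/
def IsShortcutTuple {n : ℕ} (l : ℕ) (i₁ i₂ i₃ i₄ : ZMod n) : Prop :=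
  (InClockwiseOrder [i₁, i₁ + 1, i₂, i₂ + 1, i₃, i₃ + 1, i₄, i₄ + (l : ZMod n) + 1] ∨
   InClockwiseOrder [i₁, i₁ + 1, i₂, i₂ + 1, i₄, i₄ + (l : ZMod n) + 1, i₃, i₃ + 1]) ∧
  ∀ e ∈ shortcutEdges l i₁ i₂ i₃ i₄, e ∉ (cycleGraph n).edgeSet

/-- The edge set `S` is an `l`-shortcut. -/
def IsShortcut {n : ℕ} (l : ℕ) (S : Finset (Sym2 (ZMod n))) : Prop :=
  ∃ i₁ i₂ i₃ i₄ : ZMod n, IsShortcutTuple l i₁ i₂ i₃ i₄ ∧ S = shortcutEdges l i₁ i₂ i₃ i₄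

/-- The number of `l`-shortcuts all of whose edges belong to the edge set `U`. -/
noncomputable def shortcutCountIn {n : ℕ} (l : ℕ) (U : Set (Sym2 (ZMod n))) : ℕ :=
  {S : Finset (Sym2 (ZMod n)) | IsShortcut l S ∧ (S : Set (Sym2 (ZMod n))) ⊆ U}.ncard

/-- `G` contains an `l`-shortcut. -/
def ContainsShortcut {n : ℕ} (l : ℕ) (G : SimpleGraph (ZMod n)) : Prop :=
  ∃ i₁ i₂ i₃ i₄ : ZMod n, IsShortcutTuple l i₁ i₂ i₃ i₄ ∧
    (shortcutEdges l i₁ i₂ i₃ i₄ : Set (Sym2 (ZMod n))) ⊆ G.edgeSet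

section Counting

open Finset

variable {α β : Type*}

lemma card_le_card_filter_add_card {f : α → β} (hf : f.Injective) {s : Finset α}
    {p : α → Prop} [DecidablePred p] {t : Finset β} (h : ∀ a ∈ s, ¬ p a → f a ∈ t) :
    #s ≤ #{a ∈ s | p a} + #t := by
  rw [← card_filter_add_card_filter_not (s := s) p]
  gcongr
  exact card_le_card_of_injOn f (fun a ha => (mem_filter.1 ha).elim (h a)) hf.injOn

lemma card_pairs_dist_lt_le {f : α → ℕ} (hf : f.Injective) (s : Finset α) (d : ℕ) :
    #{z ∈ s ×ˢ s | f z.1 < f z.2 + d ∧ f z.2 < f z.1 + d} ≤ (2 * d - 1) * #s := by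
  rw [mul_comm, ← card_range (2 * d - 1), ← card_product]
  refine card_le_card_of_injOn (fun z => (z.1, f z.2 + d - (f z.1 + 1))) ?_ ?_
  · rintro ⟨a, b⟩ h
    simp only [coe_filter, mem_product, Set.mem_ofPred_eq] at h
    simp only [coe_product, Set.mem_prod, mem_coe, mem_range]
    exact ⟨h.1.1, by omega⟩
  · rintro ⟨a, b⟩ h ⟨a', b'⟩ h' e
    simp only [coe_filter, mem_product, Set.mem_ofPred_eq] at h h'
    simp only [Prod.mk.injEq] at e ⊢
    obtain ⟨rfl, e⟩ := e
    exact ⟨rfl, hf (by omega)⟩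

lemma card_mul_card_le_two_mul_card_pairs_add_le {f : α → ℕ} (hf : f.Injective) (s : Finset α)
    (d : ℕ) : #s * #s ≤ 2 * #{z ∈ s ×ˢ s | f z.1 + d ≤ f z.2} + (2 * d - 1) * #s := by
  have hswap : #{z ∈ s ×ˢ s | f z.2 + d ≤ f z.1} = #{z ∈ s ×ˢ s | f z.1 + d ≤ f z.2} :=
    card_equiv (Equiv.prodComm α α) (by simp [and_comm])
  have hcover : s ×ˢ s ⊆ {z ∈ s ×ˢ s | f z.1 + d ≤ f z.2} ∪ {z ∈ s ×ˢ s | f z.2 + d ≤ f z.1} ∪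
      {z ∈ s ×ˢ s | f z.1 < f z.2 + d ∧ f z.2 < f z.1 + d} := by
    intro z hz
    simp only [mem_union, mem_filter, hz, true_and]
    omega
  have hcard := (card_le_card hcover).trans (card_union_le _ _)
  have hunion := card_union_le {z ∈ s ×ˢ s | f z.1 + d ≤ f z.2} {z ∈ s ×ˢ s | f z.2 + d ≤ f z.1}
  have hnear := card_pairs_dist_lt_le hf s d
  rw [card_product] at hcard
  omega

lemma sum_le_card_mul_add_card_filter_mul {s : Finset α} {f : α → ℝ} {c M : ℝ} (hc : 0 ≤ c)
    (hf : ∀ a ∈ s, f a ≤ M) : ∑ a ∈ s, f a ≤ #s * c + #{a ∈ s | c ≤ f a} * M := by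
  have hpoint : ∀ a ∈ s, f a ≤ c + if c ≤ f a then M else 0 := by
    intro a ha
    split_ifs with h
    · linarith [hf a ha]
    · linarith
  calc ∑ a ∈ s, f a ≤ ∑ a ∈ s, (c + if c ≤ f a then M else 0) := sum_le_sum hpoint
    _ = #s * c + #{a ∈ s | c ≤ f a} * M := by
      rw [sum_add_distrib, sum_const, nsmul_eq_mul, ← sum_filter, sum_const, nsmul_eq_mul]

lemma exists_subset_abs_sub_lt {f : α → ℝ} {N w : ℝ} (hw : 0 < w) (hN : 0 ≤ N) (s : Finset α)
    (hf : ∀ a ∈ s, f a ∈ Set.Icc 0 N) :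
    ∃ t ⊆ s, #s ≤ (N / w + 1) * #t ∧ ∀ a ∈ t, ∀ b ∈ t, |f a - f b| < w := by
  have hfloor : 0 ≤ ⌊N / w⌋ := Int.floor_nonneg.2 (by positivity)
  have hcells : (#(Icc 0 ⌊N / w⌋) : ℝ) ≤ N / w + 1 := by
    have hcard : (#(Icc 0 ⌊N / w⌋) : ℤ) = ⌊N / w⌋ + 1 := by rw [Int.card_Icc]; omega
    calc (#(Icc 0 ⌊N / w⌋) : ℝ) = ⌊N / w⌋ + 1 := by exact_mod_cast hcard
      _ ≤ N / w + 1 := by gcongr; exact Int.floor_le _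
  have hmaps : ∀ a ∈ s, ⌊f a / w⌋ ∈ Icc 0 ⌊N / w⌋ := fun a ha =>
    mem_Icc.2 ⟨Int.floor_nonneg.2 (div_nonneg (hf a ha).1 hw.le),
      Int.floor_mono (div_le_div_of_nonneg_right (hf a ha).2 hw.le)⟩
  obtain ⟨c, -, hc⟩ := exists_le_card_fiber_of_nsmul_le_card_of_maps_to
    (b := #s / (N / w + 1)) hmaps ⟨0, left_mem_Icc.2 hfloor⟩ <| by
      rw [nsmul_eq_mul]
      calc _ ≤ (N / w + 1) * (#s / (N / w + 1)) := by gcongr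
        _ = #s := mul_div_cancel₀ _ (by positivity)
  refine ⟨_, filter_subset _ _, (div_le_iff₀' (by positivity)).1 hc, fun a ha b hb => ?_⟩
  have hlt := Int.abs_sub_lt_one_of_floor_eq_floor
    ((mem_filter.1 ha).2.trans (mem_filter.1 hb).2.symm)
  rwa [← sub_div, abs_div, abs_of_pos hw, div_lt_one hw] at hlt

lemma card_biUnion_sym2_toFinset_le [DecidableEq α] (S : Finset (Sym2 α)) :
    #(S.biUnion Sym2.toFinset) ≤ #S * 2 := by
  refine card_biUnion_le_card_mul _ _ _ fun e _ => ?_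
  rw [Sym2.card_toFinset]
  split_ifs <;> omega

end Counting

section Degrees

open Finset

variable {V : Type*} [Fintype V] (G : SimpleGraph V)

/-- The neighbours of `u` that `σ` maps to neighbours of `v`. For a rotation `σ` of `ZMod n`, the
candidates for two of the vertices of a shortcut have this form. -/
noncomputable def commonNeighborsVia (σ : Equiv.Perm V) (u v : V) : Finset V :=
  {w | G.Adj u w ∧ G.Adj v (σ w)}

lemma mem_commonNeighborsVia {σ : Equiv.Perm V} {u v w : V} :
    w ∈ commonNeighborsVia G σ u v ↔ G.Adj u w ∧ G.Adj v (σ w) := by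
  simp [commonNeighborsVia]

lemma degree_add_degree_le_card_commonNeighborsVia (σ : Equiv.Perm V) (u v : V) :
    G.degree u + G.degree v ≤ #(commonNeighborsVia G σ u v) + Fintype.card V := by
  have hu : #{w | G.Adj u w} = G.degree u := by
    rw [← G.card_neighborFinset_eq_degree, G.neighborFinset_eq_filter]
  have hv : #{w | G.Adj v (σ w)} = G.degree v := by
    rw [← G.card_neighborFinset_eq_degree]
    exact card_equiv σ (by simp)
  rw [commonNeighborsVia, filter_and, ← hu, ← hv, ← card_union_add_card_inter, add_comm]
  gcongr
  exact card_le_univ _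

lemma sum_degree_eq_two_mul_ncard_edgeSet :
    ∑ v, (G.degree v : ℝ) = 2 * (G.edgeSet.ncard : ℝ) := by
  rw [← G.coe_edgeFinset, Set.ncard_coe_finset]
  exact_mod_cast G.sum_degrees_eq_twice_card_edges

lemma degree_le_card_sub_one (v : V) : (G.degree v : ℝ) ≤ Fintype.card V - 1 := by
  have : (G.degree v : ℝ) + 1 ≤ Fintype.card V := by exact_mod_cast G.degree_lt_card_verts v
  linarith

variable {G} {ε : ℝ}

lemma le_half_of_le_ncard_edgeSet (hV : 2 ≤ Fintype.card V)
    (hG : (1 / 2 + ε) * (((Fintype.card V : ℝ) ^ 2 - Fintype.card V) / 2) ≤ G.edgeSet.ncard) :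
    ε ≤ 1 / 2 := by
  have hmax : (G.edgeSet.ncard : ℝ) ≤ Fintype.card V * (Fintype.card V - 1) / 2 := by
    rw [← Nat.cast_choose_two, ← G.coe_edgeFinset, Set.ncard_coe_finset]
    exact_mod_cast G.card_edgeFinset_le_card_choose_two
  have hV' : (2 : ℝ) ≤ Fintype.card V := by exact_mod_cast hV
  have hpos : (0 : ℝ) < Fintype.card V * (Fintype.card V - 1) := by nlinarith
  refine le_of_mul_le_mul_right (a := (Fintype.card V * (Fintype.card V - 1) : ℝ)) ?_ hpos
  linarith

lemma le_card_filter_degree_add_degree (σ : Equiv.Perm V) (hε : ε ≤ 1 / 2)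
    (hV : 10 ≤ ε * Fintype.card V)
    (hG : (1 / 2 + ε) * (((Fintype.card V : ℝ) ^ 2 - Fintype.card V) / 2) ≤ G.edgeSet.ncard) :
    2 / 5 * ε * Fintype.card V ≤
      #{v | (1 + ε) * Fintype.card V ≤ (G.degree v : ℝ) + G.degree (σ v)} := by
  set N : ℝ := (Fintype.card V : ℝ)
  have hN : 0 < N := by
    have : 0 ≤ N := Nat.cast_nonneg _
    by_contra!
    nlinarith
  have hε0 : 0 < ε := pos_of_mul_pos_left (by linarith) hN.le
  have hsum : ∑ v, ((G.degree v : ℝ) + G.degree (σ v)) = 4 * (G.edgeSet.ncard : ℝ) := by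
    rw [sum_add_distrib, Equiv.sum_comp σ fun v => (G.degree v : ℝ),
      sum_degree_eq_two_mul_ncard_edgeSet]
    ring
  have hmarkov := sum_le_card_mul_add_card_filter_mul (s := univ) (c := (1 + ε) * N) (M := 2 * N)
    (f := fun v => (G.degree v : ℝ) + G.degree (σ v)) (by positivity) fun v _ => by
      linarith [degree_le_card_sub_one G v, degree_le_card_sub_one G (σ v)]
  rw [hsum, card_univ] at hmarkov
  set X := #{v | (1 + ε) * N ≤ (G.degree v : ℝ) + G.degree (σ v)}
  have : N * (ε * N - (1 + 2 * ε)) ≤ N * (2 * X) := by linarith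
  linarith [le_of_mul_le_mul_left this hN]

lemma exists_cluster_of_le_ncard_edgeSet (σ : Equiv.Perm V) {pos : V → ℝ}
    (hpos : ∀ v, pos v ∈ Set.Icc (0 : ℝ) (Fintype.card V)) (hε : ε ≤ 1 / 2)
    (hV : 10 ≤ ε * Fintype.card V)
    (hG : (1 / 2 + ε) * (((Fintype.card V : ℝ) ^ 2 - Fintype.card V) / 2) ≤ G.edgeSet.ncard) :
    ∃ T : Finset V, ε ^ 3 * Fintype.card V / 64 ≤ #T ∧
      (∀ v ∈ T, (1 + ε) * Fintype.card V ≤ (G.degree v : ℝ) + G.degree (σ v)) ∧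
      (∀ u ∈ T, ∀ v ∈ T, |pos u - pos v| < ε * Fintype.card V / 4) ∧
      ∀ u ∈ T, ∀ v ∈ T, |(G.degree u : ℝ) - G.degree v| < ε * Fintype.card V / 4 := by
  have hheavy := le_card_filter_degree_add_degree σ hε hV hG
  have hdeg : ∀ v, (G.degree v : ℝ) ∈ Set.Icc (0 : ℝ) (Fintype.card V) := fun v =>
    ⟨Nat.cast_nonneg _, by linarith [degree_le_card_sub_one G v]⟩
  set N : ℝ := (Fintype.card V : ℝ)
  have hN : 0 ≤ N := Nat.cast_nonneg _
  have hw : 0 < ε * N / 4 := by linarith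
  have hε0 : 0 < ε := pos_of_mul_pos_left (by linarith) hN
  obtain ⟨S, hS, hcardS, hSpos⟩ := exists_subset_abs_sub_lt hw hN
    {v | (1 + ε) * N ≤ (G.degree v : ℝ) + G.degree (σ v)} fun v _ => hpos v
  obtain ⟨T, hT, hcardT, hTdeg⟩ := exists_subset_abs_sub_lt hw hN S fun v _ => hdeg v
  refine ⟨T, ?_, fun v hv => (mem_filter.1 (hS (hT hv))).2,
    fun u hu v hv => hSpos u (hT hu) v (hT hv), hTdeg⟩
  have hcells : N / (ε * N / 4) + 1 ≤ 9 / 2 / ε := by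
    have : N ≠ 0 := by rintro h; simp [h] at hw
    rw [show N / (ε * N / 4) + 1 = (4 + ε) / ε by field_simp]
    gcongr
    linarith
  have hcard : 2 / 5 * ε * N ≤ 9 / 2 / ε * (9 / 2 / ε * #T) := by
    calc 2 / 5 * ε * N ≤ _ := hheavy
      _ ≤ _ := hcardS
      _ ≤ 9 / 2 / ε * (9 / 2 / ε * #T) := by
        gcongr
        exact hcardT.trans (by gcongr)
  calc ε ^ 3 * N / 64 ≤ 2 / 5 * ε * N * (2 * ε / 9) ^ 2 := by
        have : 0 ≤ ε ^ 3 * N := by positivity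
        linarith
    _ ≤ 9 / 2 / ε * (9 / 2 / ε * #T) * (2 * ε / 9) ^ 2 := by gcongr
    _ = #T := by field_simp

end Degrees

section ClockwiseOrder

variable {n : ℕ} {x a b : ZMod n}

@[simp]
lemma arcDist_self (x : ZMod n) : arcDist x x = 0 := by simp [arcDist]

lemma arcDist_add_natCast {k : ℕ} (h : arcDist x a + k < n) :
    arcDist x (a + k) = arcDist x a + k := by
  have hk : (k : ZMod n).val = k := ZMod.val_natCast_of_lt (by omega)
  rw [arcDist, add_sub_right_comm, ZMod.val_add_of_lt (by rwa [hk]), hk, arcDist]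

lemma arcDist_add_one (h : arcDist x a + 1 < n) : arcDist x (a + 1) = arcDist x a + 1 := by
  exact_mod_cast arcDist_add_natCast h

lemma arcDist_self_add_one_le (a : ZMod n) : arcDist a (a + 1) ≤ 1 := by
  rw [arcDist, add_sub_cancel_left, ZMod.val_one_eq_one_mod]
  exact Nat.mod_le 1 n

variable [NeZero n]

lemma arcDist_lt (a b : ZMod n) : arcDist a b < n := ZMod.val_lt _

lemma arcDist_injective (x : ZMod n) : (arcDist x).Injective := fun _ _ h =>
  sub_left_injective (ZMod.val_injective n h)

lemma arcDist_add_arcDist_of_le (h : arcDist x a ≤ arcDist x b) :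
    arcDist x a + arcDist a b = arcDist x b := by
  rw [arcDist.eq_1 a b, ← sub_sub_sub_cancel_right b a x, ZMod.val_sub h]
  exact Nat.add_sub_cancel' h

lemma arcDist_add_arcDist_comm (h : a ≠ b) : arcDist a b + arcDist b a = n := by
  have : NeZero (b - a) := ⟨sub_ne_zero.2 h.symm⟩
  rw [arcDist, arcDist, ← neg_sub b a, ZMod.val_neg_of_ne_zero,
    Nat.add_sub_cancel' (ZMod.val_lt _).le]

lemma arcDist_add_arcDist_of_lt (h : arcDist x a < arcDist x b) :
    arcDist x b + arcDist b a = n + arcDist x a := by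
  have hab : a ≠ b := by rintro rfl; exact h.false
  have := arcDist_add_arcDist_of_le h.le
  have := arcDist_add_arcDist_comm hab
  omega

lemma sum_arcDist_zip_of_pairwise (x c : ZMod n) :
    ∀ (a : ZMod n) (L : List (ZMod n)), (a :: L).Pairwise (arcDist x · < arcDist x ·) →
      arcDist x a + (((a :: L).zip (L ++ [c])).map fun q => arcDist q.1 q.2).sum =
        arcDist x ((a :: L).getLast (L.cons_ne_nil a)) +
          arcDist ((a :: L).getLast (L.cons_ne_nil a)) c
  | a, [], _ => by simp
  | a, b :: L, h => by
    have hab := arcDist_add_arcDist_of_le (List.rel_of_pairwise_cons h List.mem_cons_self).le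
    have ih := sum_arcDist_zip_of_pairwise x c b L h.of_cons
    simp only [List.cons_append, List.zip_cons_cons, List.map_cons, List.sum_cons,
      List.getLast_cons_cons] at ih ⊢
    omega

lemma inClockwiseOrder_of_pairwise (x : ZMod n) {L : List (ZMod n)}
    (h : (a :: b :: L).Pairwise (arcDist x · < arcDist x ·)) :
    InClockwiseOrder (a :: b :: L) := by
  refine ⟨h.imp fun hlt heq => hlt.ne (congrArg _ heq), ?_⟩
  have hlast : arcDist x a < arcDist x ((a :: b :: L).getLast (by simp)) :=
    List.rel_of_pairwise_cons h (by simp)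
  have hsum := sum_arcDist_zip_of_pairwise x a a (b :: L) h
  have hwrap := arcDist_add_arcDist_of_lt hlast
  rw [List.rotate_cons_succ, List.rotate_zero]
  omega

lemma notMem_edgeSet_cycleGraph (h : arcDist x a + 2 ≤ arcDist x b)
    (h' : arcDist x b + 2 ≤ arcDist x a + n) : s(a, b) ∉ (cycleGraph n).edgeSet := by
  have hab := arcDist_add_arcDist_of_le (h.trans' (Nat.le_add_right _ _))
  have hba := arcDist_add_arcDist_of_lt (a := a) (b := b) (x := x) (by omega)
  rw [cycleGraph, SimpleGraph.edgeSet_fromEdgeSet]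
  rintro ⟨⟨i, hi⟩, -⟩
  have := arcDist_self_add_one_le i
  rcases Sym2.eq_iff.1 hi with ⟨rfl, rfl⟩ | ⟨rfl, rfl⟩ <;> omega

end ClockwiseOrder

section Shortcuts

open Finset

variable {n l : ℕ}

lemma card_biUnion_shortcutEdges_le (i₁ i₂ i₃ i₄ : ZMod n) :
    #((shortcutEdges l i₁ i₂ i₃ i₄).biUnion Sym2.toFinset) ≤ 8 :=
  (card_biUnion_sym2_toFinset_le _).trans (Nat.mul_le_mul_right 2 card_le_four)

lemma card_le_mul_card_image_shortcutEdges (l : ℕ)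
    (T : Finset (ZMod n × ZMod n × ZMod n × ZMod n)) :
    #T ≤ 8 ^ 4 * #(T.image fun t => shortcutEdges l t.1 t.2.1 t.2.2.1 t.2.2.2) := by
  refine card_le_mul_card_image _ _ fun S hS => ?_
  obtain ⟨⟨i₁, i₂, i₃, i₄⟩, -, rfl⟩ := mem_image.1 hS
  set W := (shortcutEdges l i₁ i₂ i₃ i₄).biUnion Sym2.toFinset with hW
  have hcard : #W ≤ 8 := card_biUnion_shortcutEdges_le i₁ i₂ i₃ i₄
  calc _ ≤ #(W ×ˢ W ×ˢ W ×ˢ W) := by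
        refine card_le_card ?_
        rintro ⟨a, b, c, d⟩ ht
        have hS : shortcutEdges l a b c d = shortcutEdges l i₁ i₂ i₃ i₄ := (mem_filter.1 ht).2
        simp only [mem_product, hW, ← hS]
        simp [shortcutEdges]
    _ = #W ^ 4 := by simp only [card_product]; ring
    _ ≤ 8 ^ 4 := by gcongr

variable [NeZero n] {x y p q : ZMod n}

lemma isShortcutTuple_of_arcDist (hy : 2 ≤ arcDist x y) (hp : arcDist x y + 2 ≤ arcDist x p)
    (hp' : arcDist x p + 1 < n) (hq : arcDist x y + 2 ≤ arcDist x q)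
    (hq' : arcDist x q + (l + 1) < n)
    (hpq : arcDist x p + 2 ≤ arcDist x q ∨ arcDist x q + (l + 2) ≤ arcDist x p) :
    IsShortcutTuple l x y p q := by
  have hx := arcDist_self x
  have hx1 : arcDist x (x + 1) = 1 := by rw [arcDist_add_one (by omega), hx]
  have hy1 : arcDist x (y + 1) = arcDist x y + 1 := arcDist_add_one (by omega)
  have hp1 : arcDist x (p + 1) = arcDist x p + 1 := arcDist_add_one hp'
  have hql : arcDist x (q + l + 1) = arcDist x q + (l + 1) := by
    rw [← arcDist_add_natCast hq', add_assoc, Nat.cast_succ]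
  constructor
  · refine hpq.imp (fun _ => ?_) fun _ => ?_ <;>
      refine inClockwiseOrder_of_pairwise x ?_ <;>
      simp only [List.pairwise_cons, List.mem_cons, List.not_mem_nil, or_false, forall_eq_or_imp,
        forall_eq, IsEmpty.forall_iff, implies_true, List.Pairwise.nil, and_true] <;>
      omega
  · simp only [shortcutEdges, mem_insert, mem_singleton, forall_eq_or_imp, forall_eq]
    refine ⟨?_, ?_, ?_, ?_⟩ <;> refine notMem_edgeSet_cycleGraph (x := x) ?_ ?_ <;> omega

variable (G : SimpleGraph (ZMod n))

/-- The possible `i₃` in a shortcut contained in `G` with `i₁ = x` and `i₂ = y`. -/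
noncomputable def thirdCandidates (x y : ZMod n) : Finset (ZMod n) :=
  {p ∈ commonNeighborsVia G (Equiv.addRight 1) x (y + 1) |
    arcDist x y + 2 ≤ arcDist x p ∧ arcDist x p + 1 < n}

/-- The possible `i₄` in an `l`-shortcut contained in `G` with `i₁ = x`, `i₂ = y` and `i₃ = p`. The
two alternatives for the position of `i₄` are the types (i) and (ii). -/
noncomputable def fourthCandidates (l : ℕ) (x y p : ZMod n) : Finset (ZMod n) :=
  {q ∈ commonNeighborsVia G (Equiv.addRight (l + 1)) (x + 1) y |
    arcDist x y + 2 ≤ arcDist x q ∧ arcDist x q + (l + 1) < n ∧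
      (arcDist x p + 2 ≤ arcDist x q ∨ arcDist x q + (l + 2) ≤ arcDist x p)}

/-- The quadruples `(i₁, i₂, i₃, i₄)` that determine an `l`-shortcut contained in `G`. -/
noncomputable def shortcutTuples (l : ℕ) : Finset (ZMod n × ZMod n × ZMod n × ZMod n) :=
  {t | IsShortcutTuple l t.1 t.2.1 t.2.2.1 t.2.2.2 ∧
    (shortcutEdges l t.1 t.2.1 t.2.2.1 t.2.2.2 : Set (Sym2 (ZMod n))) ⊆ G.edgeSet}

lemma degree_add_degree_le_card_thirdCandidates (x y : ZMod n) :
    G.degree x + G.degree (y + 1) ≤ #(thirdCandidates G x y) + n + arcDist x y + 3 := by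
  have hcommon := degree_add_degree_le_card_commonNeighborsVia G (Equiv.addRight 1) x (y + 1)
  have hfilter : #(commonNeighborsVia G (Equiv.addRight 1) x (y + 1)) ≤ #(thirdCandidates G x y) +
      #(range (arcDist x y + 2) ∪ {n - 1}) := by
    refine card_le_card_filter_add_card (arcDist_injective x) fun p _ hp => ?_
    have := arcDist_lt x p
    simp only [mem_union, mem_range, mem_singleton]
    omega
  have hbad := card_union_le (range (arcDist x y + 2)) {n - 1}
  rw [card_range, card_singleton] at hbad
  rw [ZMod.card] at hcommon
  omega

lemma degree_add_degree_le_card_fourthCandidates (l : ℕ) (x y p : ZMod n) :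
    G.degree (x + 1) + G.degree y ≤
      #(fourthCandidates G l x y p) + n + arcDist x y + 2 * l + 6 := by
  have hcommon := degree_add_degree_le_card_commonNeighborsVia G (Equiv.addRight (l + 1)) (x + 1) y
  have hfilter : #(commonNeighborsVia G (Equiv.addRight (l + 1)) (x + 1) y) ≤
      #(fourthCandidates G l x y p) + #(range (arcDist x y + 2) ∪ Ico (n - (l + 1)) n ∪
        Ico (arcDist x p - (l + 1)) (arcDist x p + 2)) := by
    refine card_le_card_filter_add_card (arcDist_injective x) fun q _ hq => ?_
    have := arcDist_lt x q
    simp only [mem_union, mem_range, mem_Ico]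
    omega
  have hbad := card_union_le (range (arcDist x y + 2) ∪ Ico (n - (l + 1)) n)
    (Ico (arcDist x p - (l + 1)) (arcDist x p + 2))
  have hbad' := card_union_le (range (arcDist x y + 2)) (Ico (n - (l + 1)) n)
  rw [card_range] at hbad'
  simp only [Nat.card_Ico] at hbad hbad'
  rw [ZMod.card] at hcommon
  omega

variable {G}

lemma mem_shortcutTuples_of_candidates (hy : 2 ≤ arcDist x y) (hp : p ∈ thirdCandidates G x y)
    (hq : q ∈ fourthCandidates G l x y p) : (x, y, p, q) ∈ shortcutTuples G l := by
  simp only [thirdCandidates, fourthCandidates, mem_filter, mem_commonNeighborsVia,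
    Equiv.coe_addRight] at hp hq
  obtain ⟨⟨hxp, hyp⟩, hyp_le, hp_lt⟩ := hp
  obtain ⟨⟨hxq, hyq⟩, hyq_le, hq_lt, hpq⟩ := hq
  refine mem_filter.2 ⟨mem_univ _, isShortcutTuple_of_arcDist hy hyp_le hp_lt hyq_le hq_lt hpq, ?_⟩
  rw [← add_assoc] at hyq
  simp [shortcutEdges, Set.insert_subset_iff, hxp, hyp, hxq, hyq]

lemma card_mul_le_card_shortcutTuples {k₃ k₄ : ℕ} {P : Finset (ZMod n × ZMod n)}
    (hP : ∀ z ∈ P, 2 ≤ arcDist z.1 z.2) (h₃ : ∀ z ∈ P, k₃ ≤ #(thirdCandidates G z.1 z.2))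
    (h₄ : ∀ z ∈ P, ∀ p, k₄ ≤ #(fourthCandidates G l z.1 z.2 p)) :
    #P * (k₃ * k₄) ≤ #(shortcutTuples G l) := by
  let T := P.sigma fun z => (thirdCandidates G z.1 z.2).sigma (fourthCandidates G l z.1 z.2)
  calc #P * (k₃ * k₄) ≤ #T := by
        rw [card_sigma]
        refine card_nsmul_le_sum _ _ _ fun z hz => ?_
        rw [card_sigma]
        exact (Nat.mul_le_mul_right k₄ (h₃ z hz)).trans
          (card_nsmul_le_sum _ _ _ fun p _ => h₄ z hz p)
    _ ≤ #(shortcutTuples G l) := by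
        refine card_le_card_of_injOn (fun t => (t.1.1, t.1.2, t.2.1, t.2.2)) ?_ ?_
        · rintro ⟨⟨x, y⟩, p, q⟩ ht
          simp only [T, coe_sigma, Set.mem_sigma_iff, mem_coe] at ht
          exact mem_shortcutTuples_of_candidates (hP _ ht.1) ht.2.1 ht.2.2
        · rintro ⟨⟨x, y⟩, p, q⟩ - ⟨⟨x', y'⟩, p', q'⟩ - h
          simp only [Prod.mk.injEq] at h
          obtain ⟨rfl, rfl, rfl, rfl⟩ := h
          rfl

lemma card_shortcutTuples_le (G : SimpleGraph (ZMod n)) (l : ℕ) :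
    #(shortcutTuples G l) ≤ 8 ^ 4 * shortcutCountIn l G.edgeSet := by
  refine (card_le_mul_card_image_shortcutEdges l _).trans (Nat.mul_le_mul_left _ ?_)
  rw [shortcutCountIn, ← Set.ncard_coe_finset]
  refine Set.ncard_le_ncard (fun S hS => ?_) (Set.toFinite _)
  obtain ⟨⟨x, y, p, q⟩, ht, rfl⟩ := mem_image.1 (mem_coe.1 hS)
  obtain ⟨-, htuple, hsub⟩ := mem_filter.1 ht
  exact ⟨⟨x, y, p, q, htuple, rfl⟩, hsub⟩

end Shortcuts

section Saturation

open Finset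

variable {n l : ℕ} [NeZero n] {G : SimpleGraph (ZMod n)} {ε : ℝ}

/-- The pairs `(i₁, i₂)` that extend to many shortcuts: close together, and with large sums of the
degrees that control the number of choices for `i₃` and `i₄`. -/
structure IsGoodPair (G : SimpleGraph (ZMod n)) (ε : ℝ) (x y : ZMod n) : Prop where
  two_le_arcDist : 2 ≤ arcDist x y
  arcDist_le : (arcDist x y : ℝ) ≤ ε * n / 4
  le_degree_third : (1 + 3 / 4 * ε) * n ≤ (G.degree x : ℝ) + G.degree (y + 1)
  le_degree_fourth : (1 + 3 / 4 * ε) * n ≤ (G.degree (x + 1) : ℝ) + G.degree y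

lemma exists_card_isGoodPair (hε : ε ≤ 1 / 2) (hn : 10 ≤ ε * n) (hn' : 384 ≤ ε ^ 3 * n)
    (hG : (1 / 2 + ε) * (((n : ℝ) ^ 2 - n) / 2) ≤ G.edgeSet.ncard) :
    ∃ P : Finset (ZMod n × ZMod n), (ε ^ 3 * n / 64) ^ 2 / 4 ≤ #P ∧
      ∀ z ∈ P, IsGoodPair G ε z.1 z.2 := by
  obtain ⟨T, hcard, hheavy, hpos, hdeg⟩ := exists_cluster_of_le_ncard_edgeSet (G := G)
    (Equiv.addRight 1) (pos := fun v => (arcDist 0 v : ℝ)) (by simp [(arcDist_lt _ _).le]) hε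
    (by rwa [ZMod.card]) (by rwa [ZMod.card])
  rw [ZMod.card] at hcard hheavy hpos hdeg
  refine ⟨{z ∈ T ×ˢ T | arcDist 0 z.1 + 2 ≤ arcDist 0 z.2}, ?_, ?_⟩
  · have hpairs : (#T : ℝ) * #T ≤
        2 * #{z ∈ T ×ˢ T | arcDist 0 z.1 + 2 ≤ arcDist 0 z.2} + 3 * #T := by
      exact_mod_cast card_mul_card_le_two_mul_card_pairs_add_le (arcDist_injective 0) T 2
    have hsq : (ε ^ 3 * n / 64) ^ 2 ≤ (#T : ℝ) ^ 2 := by gcongr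
    have hsix : (6 : ℝ) * #T ≤ #T * #T :=
      mul_le_mul_of_nonneg_right (by linarith) (Nat.cast_nonneg _)
    linarith
  · rintro ⟨x, y⟩ hz
    simp only [mem_filter, mem_product] at hz
    obtain ⟨⟨hx, hy⟩, hxy⟩ := hz
    have harc : arcDist 0 x + arcDist x y = arcDist 0 y := arcDist_add_arcDist_of_le (by omega)
    have harc' : (arcDist 0 x : ℝ) + arcDist x y = arcDist 0 y := by exact_mod_cast harc
    have hclose := abs_lt.1 (hpos x hx y hy)
    have hsimilar := abs_lt.1 (hdeg x hx y hy)
    have hxsum : (1 + ε) * n ≤ (G.degree x : ℝ) + G.degree (x + 1) := hheavy x hx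
    have hysum : (1 + ε) * n ≤ (G.degree y : ℝ) + G.degree (y + 1) := hheavy y hy
    exact {
      two_le_arcDist := show 2 ≤ arcDist x y by omega
      arcDist_le := by linarith
      le_degree_third := by linarith
      le_degree_fourth := by linarith }

variable {x y : ZMod n}

lemma IsGoodPair.le_card_thirdCandidates (h : IsGoodPair G ε x y) (hn : 12 ≤ ε * n) :
    ε * n / 4 ≤ #(thirdCandidates G x y) := by
  have hcount : (G.degree x : ℝ) + G.degree (y + 1) ≤
      #(thirdCandidates G x y) + n + arcDist x y + 3 := by
    exact_mod_cast degree_add_degree_le_card_thirdCandidates G x y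
  linarith [h.arcDist_le, h.le_degree_third]

lemma IsGoodPair.le_card_fourthCandidates (h : IsGoodPair G ε x y) (hn : 48 ≤ ε * n)
    (hl : (l : ℝ) ≤ ε / 16 * n) (p : ZMod n) :
    ε * n / 4 ≤ #(fourthCandidates G l x y p) := by
  have hcount : (G.degree (x + 1) : ℝ) + G.degree y ≤
      #(fourthCandidates G l x y p) + n + arcDist x y + 2 * l + 6 := by
    exact_mod_cast degree_add_degree_le_card_fourthCandidates G l x y p
  linarith [h.arcDist_le, h.le_degree_fourth]

lemma le_shortcutCountIn_of_le_ncard_edgeSet (hε0 : 0 < ε) (hε : ε ≤ 1 / 2) (hn : 384 ≤ ε ^ 3 * n)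
    (hG : (1 / 2 + ε) * (((n : ℝ) ^ 2 - n) / 2) ≤ G.edgeSet.ncard)
    (hl : (l : ℝ) ≤ ε / 16 * n) :
    (ε / 16) ^ 8 * (n : ℝ) ^ 4 ≤ shortcutCountIn l G.edgeSet := by
  have hεn : 384 ≤ ε * n := by
    refine hn.trans (mul_le_mul_of_nonneg_right ?_ (Nat.cast_nonneg n))
    exact pow_le_of_le_one hε0.le (by linarith) (by norm_num)
  obtain ⟨P, hcard, hgood⟩ := exists_card_isGoodPair hε (by linarith) hn hG
  have htuples := card_mul_le_card_shortcutTuples (G := G) (l := l) (k₃ := ⌈ε * n / 4⌉₊)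
    (k₄ := ⌈ε * n / 4⌉₊) (fun z hz => (hgood z hz).two_le_arcDist)
    (fun z hz => Nat.ceil_le.2 <| (hgood z hz).le_card_thirdCandidates (by linarith))
    (fun z hz p => Nat.ceil_le.2 <| (hgood z hz).le_card_fourthCandidates (by linarith) hl p)
  have hshortcuts : (#P : ℝ) * (⌈ε * n / 4⌉₊ * ⌈ε * n / 4⌉₊) ≤
      8 ^ 4 * shortcutCountIn l G.edgeSet := by
    exact_mod_cast htuples.trans (card_shortcutTuples_le G l)
  have hnumeric : 8 ^ 4 * ((ε / 16) ^ 8 * (n : ℝ) ^ 4) ≤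
      (ε ^ 3 * n / 64) ^ 2 / 4 * (ε * n / 4 * (ε * n / 4)) := by
    have : 0 ≤ ε ^ 8 * (n : ℝ) ^ 4 := by positivity
    linarith
  refine le_of_mul_le_mul_left (hnumeric.trans (le_trans ?_ hshortcuts)) (by norm_num)
  gcongr <;> exact Nat.le_ceil _

end Saturation

/-- For every ε₀ > 0 there is n₀ such that for all ε' ≥ ε₀ and n ≥ n₀, every graph on the
labeled vertex set `ZMod n` with at least (1/2 + ε')·(n²−n)/2 edges contains at least
(ε'/16)⁸·n⁴ `l`-shortcuts for every `0 ≤ l ≤ (ε'/16)·n`.  (Quantifying over all graphs on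
the vertex set `ZMod n` amounts to quantifying over all labelings of an `n`-vertex graph.) -/
theorem shortcut_saturation (ε₀ : ℝ) (hε₀ : 0 < ε₀) :
    ∃ n₀ : ℕ, ∀ ε' : ℝ, ε₀ ≤ ε' → ∀ n : ℕ, n₀ ≤ n →
      ∀ G' : SimpleGraph (ZMod n),
        (1/2 + ε') * (((n : ℝ)^2 - n) / 2) ≤ (G'.edgeSet.ncard : ℝ) →
        ∀ l : ℕ, (l : ℝ) ≤ ε' / 16 * n →
          (ε' / 16)^8 * (n : ℝ)^4 ≤ (shortcutCountIn l G'.edgeSet : ℝ) := by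
  -- `384 = 6 · 64`: in a cluster of `ε³n/64 ≥ 6` vertices, at least half of the ordered pairs
  -- consist of two vertices that are neither equal nor consecutive.
  refine ⟨⌈384 / ε₀ ^ 3⌉₊ + 2, fun ε' hε n hn G' hG l hl => ?_⟩
  have : NeZero n := ⟨by omega⟩
  have hε0 : 0 < ε' := hε₀.trans_le hε
  have hhalf : ε' ≤ 1 / 2 :=
    le_half_of_le_ncard_edgeSet (G := G') (by rw [ZMod.card]; omega) (by rwa [ZMod.card])
  have hlarge : 384 / ε₀ ^ 3 ≤ (n : ℝ) := Nat.ceil_le.1 (by omega)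
  refine le_shortcutCountIn_of_le_ncard_edgeSet hε0 hhalf ?_ hG hl
  calc (384 : ℝ) ≤ ε₀ ^ 3 * n := (div_le_iff₀' (by positivity)).1 hlarge
    _ ≤ ε' ^ 3 * n := by gcongr
end

section
/- There exists a positive constant K such that for all integers n and l with 0 ≤ 2l ≤ n, the hypergraph H_n^l is (K, n^{-1/2})-bounded; that is, for every i ∈ {1,2,3} and every q ∈ [n^{-1/2}, 1], E[ Σ_{v ∈ V(H_n^l)} deg_i(v, V(H_n^l)_q)² ] ≤ K q^{2i} |E(H_n^l)|² / |V(H_n^l)|. -/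
/-!
Expanding the square turns `E[∑ deg_i(v, V_q)²]` into a sum over pairs of hyperedges `S`, `T` that
share a vertex `v`. A union bound over the `i`-element subsets `A ⊆ S \ {v}` and `B ⊆ T \ {v}` that
`V_q` has to contain bounds the contribution of `(S, T, v)` by `O(q ^ (2 * i) * q ^ (1 - |S ∩ T|))`.

The four edges of a shortcut join its four parameters in a 4-cycle, so if `T` shares more than `k`
edges with `S`, then `min (k + 2) 4` of the parameters of `T` are determined by `S` up to boundedly
many values. Hence only `O(n ^ (2 - k))` shortcuts (`O(1)` if `k > 2`) share more than `k` edges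
with `S`. As `q⁻¹ ^ k ≤ n ^ ⌈k / 2⌉` for `q ≥ n ^ (-1 / 2)`, each `S` contributes
`O(q ^ (2 * i) * n ^ 2)` and the expectation is `O(q ^ (2 * i) * n ^ 2 * |H|)`.

Finally `|V| ≤ n ^ 2`, and `|H| = Ω(n ^ 4)` unless `H` is empty, since four parameters spread around
the cycle can be moved independently in intervals of linear length. So `n ^ 2 = O(|H| / |V|)`.
-/

open Filter Topology Classical

/-- The vertex set of the hypergraph `H_n^l`: the edge set of the complete graph on `ZMod n`. -/
def knEdges (n : ℕ) : Set (Sym2 (ZMod n)) := {e | ¬ e.IsDiag}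

/-- The vertex set of `H_n^l` as a finset (for `n ≠ 0`). -/
noncomputable def knEdgeFinset (n : ℕ) [NeZero n] : Finset (Sym2 (ZMod n)) :=
  Finset.univ.filter (fun e => ¬ e.IsDiag)

/-- `deg_i(v, U)` in the hypergraph `H_n^l`: the number of hyperedges (`l`-shortcuts) `S`
with `v ∈ S` and `|S ∩ (U ∖ {v})| ≥ i`. -/
noncomputable def shortcutDeg {n : ℕ} (l i : ℕ) (v : Sym2 (ZMod n))
    (U : Finset (Sym2 (ZMod n))) : ℕ :=
  {S : Finset (Sym2 (ZMod n)) | IsShortcut l S ∧ v ∈ S ∧ i ≤ (S ∩ U.erase v).card}.ncard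

/-- `E[ Σ_{v ∈ V(H_n^l)} deg_i(v, (V(H_n^l))_q)² ]`, where `(V(H_n^l))_q` is the random
subset of `V(H_n^l)` keeping each element independently with probability `q`. -/
noncomputable def shortcutDegSqExpectation (n l i : ℕ) (q : ℝ) : ℝ :=
  if h : n = 0 then 0 else
    letI : NeZero n := ⟨h⟩
    ∑ W ∈ (knEdgeFinset n).powerset,
      q ^ W.card * (1 - q) ^ ((knEdgeFinset n).card - W.card) *
        ∑ v ∈ knEdgeFinset n, ((shortcutDeg l i v W : ℝ))^2

open Finset

/-! ### Random subsets -/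

section RandomSubset

variable {V ι : Type*}

/-- The expectation of `f W`, where `W` is the random subset of `E` that keeps each element
independently with probability `q`, written out as a finite sum. -/
def randomSubsetExpect (E : Finset V) (q : ℝ) (f : Finset V → ℝ) : ℝ :=
  ∑ W ∈ E.powerset, q ^ #W * (1 - q) ^ (#E - #W) * f W

variable {E : Finset V} {q : ℝ}

lemma randomSubsetExpect_mono {f g : Finset V → ℝ} (hq : 0 ≤ q) (hq1 : q ≤ 1)
    (hfg : ∀ W, f W ≤ g W) : randomSubsetExpect E q f ≤ randomSubsetExpect E q g := by
  have := sub_nonneg.2 hq1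
  exact sum_le_sum fun W _ => mul_le_mul_of_nonneg_left (hfg W) (by positivity)

lemma randomSubsetExpect_sum (s : Finset ι) (f : ι → Finset V → ℝ) :
    randomSubsetExpect E q (fun W => ∑ j ∈ s, f j W) = ∑ j ∈ s, randomSubsetExpect E q (f j) := by
  simp only [randomSubsetExpect, mul_sum]
  exact sum_comm

variable [DecidableEq V]

-- Both sides are the expansion of `∏ a ∈ E, (q + c a)`, with `c a = 0` on `A` and `1 - q` off `A`.
lemma randomSubsetExpect_superset {A : Finset V} (hA : A ⊆ E) :
    randomSubsetExpect E q (fun W => if A ⊆ W then 1 else 0) = q ^ #A := by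
  have hprod : ∀ W ∈ E.powerset, ∏ a ∈ E \ W, (if a ∈ A then 0 else 1 - q) =
      (1 - q) ^ (#E - #W) * if A ⊆ W then 1 else 0 := by
    intro W hW
    split_ifs with hAW
    · rw [mul_one, ← card_sdiff_of_subset (mem_powerset.1 hW), ← prod_const]
      exact prod_congr rfl fun a ha => if_neg fun haA => (mem_sdiff.1 ha).2 (hAW haA)
    · obtain ⟨a, haA, haW⟩ := not_subset.1 hAW
      rw [mul_zero]
      exact prod_eq_zero (mem_sdiff.2 ⟨hA haA, haW⟩) (if_pos haA)
  calc randomSubsetExpect E q (fun W => if A ⊆ W then 1 else 0)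
      = ∑ W ∈ E.powerset, (∏ _a ∈ W, q) * ∏ a ∈ E \ W, (if a ∈ A then 0 else 1 - q) :=
        sum_congr rfl fun W hW => by rw [hprod W hW, prod_const, mul_assoc]
    _ = ∏ a ∈ E, (q + if a ∈ A then 0 else 1 - q) := (prod_add _ _ _).symm
    _ = ∏ a ∈ E, if a ∈ A then q else 1 := prod_congr rfl fun a _ => by split_ifs <;> ring
    _ = q ^ #A := by rw [prod_ite_mem, prod_const, inter_eq_right.2 hA]

lemma randomSubsetExpect_superset_le (hq : 0 ≤ q) (A : Finset V) :
    randomSubsetExpect E q (fun W => if A ⊆ W then 1 else 0) ≤ q ^ #A := by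
  by_cases hA : A ⊆ E
  · exact (randomSubsetExpect_superset hA).le
  · refine (sum_eq_zero fun W hW => ?_).trans_le (pow_nonneg hq _)
    have hAW : ¬A ⊆ W := fun hAW => hA (hAW.trans (mem_powerset.1 hW))
    simp only [if_neg hAW, mul_zero]

lemma randomSubsetExpect_card_filter_superset_le (hq : 0 ≤ q) (s : Finset ι)
    (A : ι → Finset V) :
    randomSubsetExpect E q (fun W => #{j ∈ s | A j ⊆ W}) ≤ ∑ j ∈ s, q ^ #(A j) := by
  simp only [card_filter, Nat.cast_sum, Nat.cast_ite, Nat.cast_one, Nat.cast_zero]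
  rw [randomSubsetExpect_sum]
  exact sum_le_sum fun j _ => randomSubsetExpect_superset_le hq (A j)

end RandomSubset

/-! ### The second moment of the degrees of a hypergraph -/

section Hypergraph

variable {V : Type*} [DecidableEq V]

/-- `deg_i(v, U)` in the hypergraph with hyperedge set `H`. -/
def hyperDegree (H : Finset (Finset V)) (i : ℕ) (v : V) (U : Finset V) : ℕ :=
  #{S ∈ H | v ∈ S ∧ i ≤ #(S ∩ U.erase v)}

/-- The pairs `⟨S, A⟩` of a hyperedge `S` through `v` and an `i`-element subset `A` of `S \ {v}`.
A union bound over them estimates `hyperDegree`. -/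
def hyperFlags (H : Finset (Finset V)) (i : ℕ) (v : V) : Finset (Σ _ : Finset V, Finset V) :=
  {S ∈ H | v ∈ S}.sigma fun S => (S.erase v).powersetCard i

variable {E S T : Finset V} {H : Finset (Finset V)} {i r : ℕ} {v : V} {q : ℝ}

lemma hyperDegree_le_card_hyperFlags (H : Finset (Finset V)) (i : ℕ) (v : V) (W : Finset V) :
    hyperDegree H i v W ≤ #{P ∈ hyperFlags H i v | P.2 ⊆ W} := by
  refine card_le_card_of_surjOn Sigma.fst fun S hS => ?_
  obtain ⟨hSH, hvS, hi⟩ := mem_filter.1 hS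
  obtain ⟨A, hA, hAi⟩ := exists_subset_card_eq hi
  have hAS : A ⊆ S.erase v := by
    rw [inter_erase, ← erase_inter] at hA
    exact hA.trans inter_subset_left
  have hAW : A ⊆ W := hA.trans (inter_subset_right.trans (erase_subset _ _))
  exact ⟨⟨S, A⟩, by simp [hyperFlags, hSH, hvS, hAS, hAi, hAW], rfl⟩

-- As `v` lies in neither `A` nor `B`, these sets share at most `#(S ∩ T) - 1` elements.
lemma pow_card_union_le {A B : Finset V} (hq : 0 < q) (hq1 : q ≤ 1) (hv : v ∈ S ∩ T)
    (hA : A ∈ (S.erase v).powersetCard i) (hB : B ∈ (T.erase v).powersetCard i) :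
    q ^ #(A ∪ B) ≤ q ^ (2 * i) * q⁻¹ ^ (#(S ∩ T) - 1) := by
  obtain ⟨hAS, hAi⟩ := mem_powersetCard.1 hA
  obtain ⟨hBT, hBi⟩ := mem_powersetCard.1 hB
  have hinter : #(A ∩ B) ≤ #(S ∩ T) - 1 := by
    rw [← card_erase_of_mem hv]
    exact card_le_card (by grind)
  have hcard : 2 * i = #(A ∪ B) + #(A ∩ B) := by rw [card_union_add_card_inter, hAi, hBi, two_mul]
  calc q ^ #(A ∪ B) = q ^ (2 * i) * q⁻¹ ^ #(A ∩ B) := by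
        rw [hcard, pow_add, mul_assoc, ← mul_pow, mul_inv_cancel₀ hq.ne', one_pow, mul_one]
    _ ≤ q ^ (2 * i) * q⁻¹ ^ (#(S ∩ T) - 1) := by
        gcongr
        exact (one_le_inv₀ hq).2 hq1

lemma randomSubsetExpect_sq_hyperDegree_le_sum_hyperFlags (hq : 0 ≤ q) (hq1 : q ≤ 1) :
    randomSubsetExpect E q (fun W => (hyperDegree H i v W : ℝ) ^ 2) ≤
      ∑ P ∈ hyperFlags H i v ×ˢ hyperFlags H i v, q ^ #(P.1.2 ∪ P.2.2) := by
  calc randomSubsetExpect E q (fun W => (hyperDegree H i v W : ℝ) ^ 2)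
      ≤ randomSubsetExpect E q fun W =>
          #{P ∈ hyperFlags H i v ×ˢ hyperFlags H i v | P.1.2 ∪ P.2.2 ⊆ W} := by
        refine randomSubsetExpect_mono hq hq1 fun W => ?_
        have hprod : {P ∈ hyperFlags H i v | P.2 ⊆ W} ×ˢ {P ∈ hyperFlags H i v | P.2 ⊆ W} ⊆
            {P ∈ hyperFlags H i v ×ˢ hyperFlags H i v | P.1.2 ∪ P.2.2 ⊆ W} := by
          intro P hP
          simp only [mem_product, mem_filter, union_subset_iff] at hP ⊢
          tauto
        have hsq := (Nat.pow_le_pow_left (hyperDegree_le_card_hyperFlags H i v W) 2).trans_eq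
          ((sq _).trans (card_product _ _).symm)
        exact_mod_cast hsq.trans (card_le_card hprod)
    _ ≤ ∑ P ∈ hyperFlags H i v ×ˢ hyperFlags H i v, q ^ #(P.1.2 ∪ P.2.2) :=
        randomSubsetExpect_card_filter_superset_le hq _ _

lemma card_powersetCard_erase_le (hS : #S ≤ r) (i : ℕ) (v : V) :
    #((S.erase v).powersetCard i) ≤ 2 ^ r := by
  rw [card_powersetCard]
  exact (Nat.choose_le_two_pow _ _).trans
    (Nat.pow_le_pow_right two_pos ((card_le_card (erase_subset _ _)).trans hS))

lemma randomSubsetExpect_sq_hyperDegree_le (hq : 0 < q) (hq1 : q ≤ 1) (hH : ∀ S ∈ H, #S ≤ r) :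
    randomSubsetExpect E q (fun W => (hyperDegree H i v W : ℝ) ^ 2) ≤
      4 ^ r * q ^ (2 * i) * ∑ S ∈ H with v ∈ S, ∑ T ∈ H with v ∈ T, q⁻¹ ^ (#(S ∩ T) - 1) := by
  have hsubsets : ∀ S ∈ H, (#((S.erase v).powersetCard i) : ℝ) ≤ 2 ^ r := fun S hS =>
    mod_cast card_powersetCard_erase_le (hH S hS) i v
  calc randomSubsetExpect E q (fun W => (hyperDegree H i v W : ℝ) ^ 2)
      ≤ ∑ P ∈ hyperFlags H i v ×ˢ hyperFlags H i v, q ^ #(P.1.2 ∪ P.2.2) :=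
        randomSubsetExpect_sq_hyperDegree_le_sum_hyperFlags hq.le hq1
    _ = ∑ S ∈ H with v ∈ S, ∑ A ∈ (S.erase v).powersetCard i,
          ∑ T ∈ H with v ∈ T, ∑ B ∈ (T.erase v).powersetCard i, q ^ #(A ∪ B) := by
        simp only [sum_product, hyperFlags, sum_sigma]
    _ ≤ ∑ S ∈ H with v ∈ S, ∑ _A ∈ (S.erase v).powersetCard i, ∑ T ∈ H with v ∈ T,
          ∑ _B ∈ (T.erase v).powersetCard i, q ^ (2 * i) * q⁻¹ ^ (#(S ∩ T) - 1) := by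
        gcongr with S hS A hA T hT B hB
        exact pow_card_union_le hq hq1
          (mem_inter.2 ⟨(mem_filter.1 hS).2, (mem_filter.1 hT).2⟩) hA hB
    _ ≤ ∑ S ∈ H with v ∈ S, 2 ^ r * ∑ T ∈ H with v ∈ T,
          2 ^ r * (q ^ (2 * i) * q⁻¹ ^ (#(S ∩ T) - 1)) := by
        simp only [sum_const, nsmul_eq_mul]
        gcongr with S hS T hT
        · exact hsubsets S (mem_filter.1 hS).1
        · exact hsubsets T (mem_filter.1 hT).1
    _ = 4 ^ r * q ^ (2 * i) *
          ∑ S ∈ H with v ∈ S, ∑ T ∈ H with v ∈ T, q⁻¹ ^ (#(S ∩ T) - 1) := by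
        simp only [← mul_sum]
        rw [show (4 : ℝ) ^ r = 2 ^ r * 2 ^ r by rw [← mul_pow]; norm_num]
        ring

lemma sum_filter_mem_filter_mem_le {f : Finset V → Finset V → ℝ} (hf : ∀ S T, 0 ≤ f S T)
    (E : Finset V) (H : Finset (Finset V)) :
    ∑ v ∈ E, ∑ S ∈ H with v ∈ S, ∑ T ∈ H with v ∈ T, f S T ≤
      ∑ S ∈ H, ∑ T ∈ H, #(S ∩ T) * f S T := by
  calc ∑ v ∈ E, ∑ S ∈ H with v ∈ S, ∑ T ∈ H with v ∈ T, f S T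
      = ∑ v ∈ E, ∑ S ∈ H, ∑ T ∈ H, if v ∈ S ∩ T then f S T else 0 := by
        simp only [sum_filter, mem_inter, ite_and, ← ite_sum_zero]
    _ = ∑ S ∈ H, ∑ T ∈ H, ∑ v ∈ E, if v ∈ S ∩ T then f S T else 0 := by
        rw [sum_comm]
        exact sum_congr rfl fun S _ => sum_comm
    _ ≤ ∑ S ∈ H, ∑ T ∈ H, #(S ∩ T) * f S T := by
        gcongr with S _ T _
        rw [sum_ite_mem, sum_const, nsmul_eq_mul]
        exact mul_le_mul_of_nonneg_right (mod_cast card_le_card inter_subset_right) (hf S T)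

lemma sum_card_inter_mul_pow_le {a : ℝ} (ha : 0 ≤ a) (hS : #S ≤ r) (H : Finset (Finset V)) :
    ∑ T ∈ H, #(S ∩ T) * a ^ (#(S ∩ T) - 1) ≤
      r * ∑ k ∈ range r, a ^ k * #{T ∈ H | k < #(S ∩ T)} := by
  have hterm : ∀ T ∈ H, #(S ∩ T) * a ^ (#(S ∩ T) - 1) ≤
      r * ∑ k ∈ range r, if k < #(S ∩ T) then a ^ k else 0 := by
    intro T _
    have hr : #(S ∩ T) ≤ r := (card_le_card inter_subset_left).trans hS
    have hnn : ∀ k ∈ range r, 0 ≤ if k < #(S ∩ T) then a ^ k else 0 := fun k _ => by positivity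
    rcases Nat.eq_zero_or_pos #(S ∩ T) with h0 | hpos
    · rw [h0, Nat.cast_zero, zero_mul]
      simp
    · gcongr
      have := single_le_sum hnn (mem_range.2 (show #(S ∩ T) - 1 < r by omega))
      rwa [if_pos (by omega)] at this
  calc ∑ T ∈ H, #(S ∩ T) * a ^ (#(S ∩ T) - 1)
      ≤ ∑ T ∈ H, r * ∑ k ∈ range r, if k < #(S ∩ T) then a ^ k else 0 := sum_le_sum hterm
    _ = r * ∑ k ∈ range r, a ^ k * #{T ∈ H | k < #(S ∩ T)} := by
        rw [← mul_sum, sum_comm]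
        simp only [← sum_filter, sum_const, nsmul_eq_mul, mul_comm]

theorem randomSubsetExpect_sum_sq_hyperDegree_le {D : ℝ} (hq : 0 < q) (hq1 : q ≤ 1)
    (hH : ∀ S ∈ H, #S ≤ r)
    (hD : ∀ S ∈ H, ∀ k < r, q⁻¹ ^ k * #{T ∈ H | k < #(S ∩ T)} ≤ D) :
    randomSubsetExpect E q (fun W => ∑ v ∈ E, (hyperDegree H i v W : ℝ) ^ 2) ≤
      4 ^ r * r ^ 2 * D * q ^ (2 * i) * #H := by
  have hpairs : ∀ S ∈ H, ∑ T ∈ H, #(S ∩ T) * q⁻¹ ^ (#(S ∩ T) - 1) ≤ r ^ 2 * D := by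
    intro S hS
    calc ∑ T ∈ H, #(S ∩ T) * q⁻¹ ^ (#(S ∩ T) - 1)
        ≤ r * ∑ k ∈ range r, q⁻¹ ^ k * #{T ∈ H | k < #(S ∩ T)} :=
          sum_card_inter_mul_pow_le (inv_nonneg.2 hq.le) (hH S hS) H
      _ ≤ r * ∑ _k ∈ range r, D := by
          gcongr with k hk
          exact hD S hS k (mem_range.1 hk)
      _ = r ^ 2 * D := by rw [sum_const, card_range, nsmul_eq_mul]; ring
  calc randomSubsetExpect E q (fun W => ∑ v ∈ E, (hyperDegree H i v W : ℝ) ^ 2)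
      = ∑ v ∈ E, randomSubsetExpect E q fun W => (hyperDegree H i v W : ℝ) ^ 2 :=
        randomSubsetExpect_sum _ _
    _ ≤ ∑ v ∈ E, 4 ^ r * q ^ (2 * i) *
          ∑ S ∈ H with v ∈ S, ∑ T ∈ H with v ∈ T, q⁻¹ ^ (#(S ∩ T) - 1) :=
        sum_le_sum fun v _ => randomSubsetExpect_sq_hyperDegree_le hq hq1 hH
    _ ≤ 4 ^ r * q ^ (2 * i) * ∑ S ∈ H, ∑ T ∈ H, #(S ∩ T) * q⁻¹ ^ (#(S ∩ T) - 1) := by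
        rw [← mul_sum]
        gcongr
        exact sum_filter_mem_filter_mem_le (fun S T => by positivity) E H
    _ ≤ 4 ^ r * q ^ (2 * i) * ∑ _S ∈ H, (r : ℝ) ^ 2 * D := by
        gcongr with S hS
        exact hpairs S hS
    _ = 4 ^ r * r ^ 2 * D * q ^ (2 * i) * #H := by rw [sum_const, nsmul_eq_mul]; ring

end Hypergraph

/-! ### Shortcuts sharing edges with a given set -/

section Tuples

lemma card_filter_le_card_filter_mem_le {ι α : Type*} [Fintype ι] [DecidableEq ι] [Fintype α]
    [DecidableEq α] (Y : Finset α) (j : ℕ) :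
    #{t : ι → α | j ≤ #{c | t c ∈ Y}} ≤
      (Fintype.card ι).choose j * (#Y ^ j * Fintype.card α ^ (Fintype.card ι - j)) := by
  have hcover : ({t : ι → α | j ≤ #{c | t c ∈ Y}} : Finset (ι → α)) ⊆
      (univ.powersetCard j).biUnion fun C =>
        Fintype.piFinset fun c => if c ∈ C then Y else univ := by
    intro t ht
    obtain ⟨C, hC, hCj⟩ := exists_subset_card_eq (mem_filter.1 ht).2
    refine mem_biUnion.2 ⟨C, mem_powersetCard_univ.2 hCj, Fintype.mem_piFinset.2 fun c => ?_⟩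
    split_ifs with hc
    · exact (mem_filter.1 (hC hc)).2
    · exact mem_univ _
  have hpi : ∀ C ∈ (univ : Finset ι).powersetCard j,
      #(Fintype.piFinset fun c => if c ∈ C then Y else univ) ≤
        #Y ^ j * Fintype.card α ^ (Fintype.card ι - j) := by
    intro C hC
    rw [← mem_powersetCard_univ.1 hC, ← card_compl, Fintype.card_piFinset]
    simp only [apply_ite card, card_univ, prod_ite, prod_const, filter_univ_mem, ← compl_filter,
      le_refl]
  refine (card_le_card hcover).trans ((card_biUnion_le_card_mul _ _ _ hpi).trans_eq ?_)
  rw [card_powersetCard, card_univ]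

variable {n : ℕ}

/-- The edges of the `l`-shortcut with parameters `t = (i₁, i₂, i₃, i₄)`, indexed by `Fin 4`. -/
def tupleEdge (l : ℕ) (t : Fin 4 → ZMod n) : Fin 4 → Sym2 (ZMod n) :=
  ![s(t 0, t 2), s(t 0 + 1, t 3), s(t 1, t 3 + (l : ZMod n) + 1), s(t 1 + 1, t 2 + 1)]

/-- The two parameters on which each edge of a shortcut depends: the four edges join the four
parameters in a 4-cycle. -/
def tupleEdgeCoords : Fin 4 → Finset (Fin 4) := ![{0, 2}, {0, 3}, {1, 3}, {1, 2}]

/-- The values which the two parameters of an `l`-shortcut edge belonging to `S` can take. -/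
noncomputable def anchorSet (l : ℕ) (S : Finset (Sym2 (ZMod n))) : Finset (ZMod n) :=
  (S.biUnion Sym2.toFinset).biUnion fun a => {a, a - 1, a - (l + 1)}

lemma image_tupleEdge (l : ℕ) (t : Fin 4 → ZMod n) :
    univ.image (tupleEdge l t) = shortcutEdges l (t 0) (t 1) (t 2) (t 3) := by
  ext e
  simp [tupleEdge, shortcutEdges, Fin.exists_fin_succ, eq_comm]

lemma card_anchorSet_le (l : ℕ) (S : Finset (Sym2 (ZMod n))) : #(anchorSet l S) ≤ #S * 2 * 3 := by
  refine (card_biUnion_le_card_mul _ _ 3 fun a _ => card_le_three).trans ?_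
  gcongr
  refine card_biUnion_le_card_mul _ _ _ fun e _ => ?_
  rw [Sym2.card_toFinset]
  split_ifs <;> norm_num

variable {l : ℕ} {S : Finset (Sym2 (ZMod n))} {t : Fin 4 → ZMod n}

lemma mem_tupleEdge_of_mem_tupleEdgeCoords (l : ℕ) (t : Fin 4 → ZMod n) {j c : Fin 4}
    (hc : c ∈ tupleEdgeCoords j) :
    t c ∈ tupleEdge l t j ∨ t c + 1 ∈ tupleEdge l t j ∨ t c + l + 1 ∈ tupleEdge l t j := by
  revert c
  fin_cases j <;> simp [tupleEdgeCoords, tupleEdge]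

lemma mem_anchorSet_of_tupleEdge_mem {j c : Fin 4} (hj : tupleEdge l t j ∈ S)
    (hc : c ∈ tupleEdgeCoords j) : t c ∈ anchorSet l S := by
  simp only [anchorSet, mem_biUnion, mem_insert, mem_singleton, Sym2.mem_toFinset]
  obtain h | h | h := mem_tupleEdge_of_mem_tupleEdgeCoords l t hc
  · exact ⟨_, ⟨_, hj, h⟩, Or.inl rfl⟩
  · exact ⟨_, ⟨_, hj, h⟩, Or.inr (Or.inl (by ring))⟩
  · exact ⟨_, ⟨_, hj, h⟩, Or.inr (Or.inr (by ring))⟩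

lemma min_card_add_one_le_card_biUnion_tupleEdgeCoords :
    ∀ J : Finset (Fin 4), J.Nonempty → min (#J + 1) 4 ≤ #(J.biUnion tupleEdgeCoords) := by
  decide

lemma min_le_card_filter_mem_anchorSet {k : ℕ} (hk : k < #(S ∩ univ.image (tupleEdge l t))) :
    min (k + 2) 4 ≤ #{c | t c ∈ anchorSet l S} := by
  set J : Finset (Fin 4) := {j | tupleEdge l t j ∈ S}
  have hkJ : k < #J := by
    refine hk.trans_le ((card_le_card fun e he => ?_).trans (card_image_le (f := tupleEdge l t)))
    obtain ⟨heS, he⟩ := mem_inter.1 he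
    obtain ⟨j, -, rfl⟩ := mem_image.1 he
    exact mem_image_of_mem _ (mem_filter.2 ⟨mem_univ _, heS⟩)
  calc min (k + 2) 4 ≤ min (#J + 1) 4 := by omega
    _ ≤ #(J.biUnion tupleEdgeCoords) :=
        min_card_add_one_le_card_biUnion_tupleEdgeCoords J (card_pos.1 (by omega))
    _ ≤ #{c | t c ∈ anchorSet l S} := by
        refine card_le_card fun c hc => ?_
        obtain ⟨j, hj, hcj⟩ := mem_biUnion.1 hc
        exact mem_filter.2
          ⟨mem_univ _, mem_anchorSet_of_tupleEdge_mem (mem_filter.1 hj).2 hcj⟩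

variable [NeZero n]

lemma card_filter_lt_card_inter_image_tupleEdge_le (l k : ℕ) (hS : #S ≤ 4) :
    #{t : Fin 4 → ZMod n | k < #(S ∩ univ.image (tupleEdge l t))} ≤ 24 ^ 4 * n ^ (2 - k) := by
  set j := min (k + 2) 4
  have hj : j ≤ 4 := min_le_right _ _
  have hY : #(anchorSet l S) ≤ 24 := (card_anchorSet_le l S).trans (by omega)
  have hconst : Nat.choose 4 j * 24 ^ j ≤ 24 ^ 4 := by interval_cases j <;> decide
  calc #{t : Fin 4 → ZMod n | k < #(S ∩ univ.image (tupleEdge l t))}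
      ≤ #{t : Fin 4 → ZMod n | j ≤ #{c | t c ∈ anchorSet l S}} :=
        card_le_card (monotone_filter_right _ fun t _ => min_le_card_filter_mem_anchorSet)
    _ ≤ Nat.choose 4 j * (#(anchorSet l S) ^ j * n ^ (4 - j)) := by
        simpa using card_filter_le_card_filter_mem_le (ι := Fin 4) (anchorSet l S) j
    _ ≤ Nat.choose 4 j * (24 ^ j * n ^ (4 - j)) := by gcongr
    _ ≤ 24 ^ 4 * n ^ (2 - k) := by
        rw [← mul_assoc, show 4 - j = 2 - k by omega]
        exact Nat.mul_le_mul_right _ hconst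

lemma card_filter_image_tupleEdge_eq_le (hS : #S ≤ 4) :
    #{t : Fin 4 → ZMod n | univ.image (tupleEdge l t) = S} ≤ 24 ^ 4 := by
  have hcoords : ∀ c, ∃ j, c ∈ tupleEdgeCoords j := by decide
  have hsub : ({t : Fin 4 → ZMod n | univ.image (tupleEdge l t) = S} : Finset _) ⊆
      Fintype.piFinset fun _ => anchorSet l S := by
    intro t ht
    refine Fintype.mem_piFinset.2 fun c => ?_
    obtain ⟨j, hc⟩ := hcoords c
    refine mem_anchorSet_of_tupleEdge_mem (j := j) ?_ hc
    rw [← (mem_filter.1 ht).2]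
    exact mem_image_of_mem _ (mem_univ j)
  calc #{t : Fin 4 → ZMod n | univ.image (tupleEdge l t) = S}
      ≤ #(anchorSet l S) ^ 4 := by simpa [Fintype.card_piFinset] using card_le_card hsub
    _ ≤ 24 ^ 4 := Nat.pow_le_pow_left ((card_anchorSet_le l S).trans (by omega)) 4

/-- The hyperedge set of `H_n^l`. -/
noncomputable def shortcutFinset (n l : ℕ) [NeZero n] : Finset (Finset (Sym2 (ZMod n))) :=
  {S | IsShortcut l S}

lemma exists_image_tupleEdge_eq (hS : S ∈ shortcutFinset n l) :
    ∃ t : Fin 4 → ZMod n, univ.image (tupleEdge l t) = S := by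
  obtain ⟨i₁, i₂, i₃, i₄, -, rfl⟩ := (mem_filter.1 hS).2
  exact ⟨![i₁, i₂, i₃, i₄], image_tupleEdge l _⟩

lemma card_le_four_of_mem_shortcutFinset (hS : S ∈ shortcutFinset n l) : #S ≤ 4 := by
  obtain ⟨t, rfl⟩ := exists_image_tupleEdge_eq hS
  exact card_image_le

lemma card_filter_lt_card_inter_shortcutFinset_le (l k : ℕ) (hS : #S ≤ 4) :
    #{T ∈ shortcutFinset n l | k < #(S ∩ T)} ≤ 24 ^ 4 * n ^ (2 - k) := by
  refine (card_le_card_of_surjOn (fun t => univ.image (tupleEdge l t)) fun T hT => ?_).trans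
    (card_filter_lt_card_inter_image_tupleEdge_le l k hS)
  obtain ⟨hT, hk⟩ := mem_filter.1 hT
  obtain ⟨t, rfl⟩ := exists_image_tupleEdge_eq hT
  exact ⟨t, by simpa using hk, rfl⟩

end Tuples

/-! ### A lower bound on the number of shortcuts -/

section LowerBound

variable {n : ℕ}

lemma arcDist_add_add_of_le (a : ZMod n) {u v : ℕ} (huv : u ≤ v) (hv : v < n) :
    arcDist (a + (u : ZMod n)) (a + (v : ZMod n)) = v - u := by
  have : NeZero n := ⟨by omega⟩
  rw [arcDist, add_sub_add_left_eq_sub, ← Nat.cast_sub huv, ZMod.val_natCast_of_lt (by omega)]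

lemma arcDist_add_add_of_gt (a : ZMod n) {u v : ℕ} (hvu : v < u) (hu : u < n) :
    arcDist (a + (u : ZMod n)) (a + (v : ZMod n)) = n + v - u := by
  have hcast : (v - u : ZMod n) = (n + v - u : ℕ) := by
    rw [Nat.cast_sub (by omega), Nat.cast_add, ZMod.natCast_self, zero_add]
  have : NeZero n := ⟨by omega⟩
  rw [arcDist, add_sub_add_left_eq_sub, hcast, ZMod.val_natCast_of_lt (by omega)]

lemma sum_arcDist_zip_append (a : ZMod n) {b u : ℕ} {us : List ℕ} (hbu : b < u)
    (hus : (u :: us).IsChain (· < ·)) (hn : ∀ w ∈ u :: us, w < n) :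
    ((((u :: us).map fun w : ℕ => a + (w : ZMod n)).zip
      ((us ++ [b]).map fun w : ℕ => a + (w : ZMod n))).map fun q => arcDist q.1 q.2).sum =
      n + b - u := by
  induction us generalizing u with
  | nil => simpa using arcDist_add_add_of_gt a hbu (hn u List.mem_cons_self)
  | cons v vs ih =>
    obtain ⟨huv, hvs⟩ := List.isChain_cons_cons.1 hus
    have hv : v < n := hn v (by simp)
    have htail := ih (hbu.trans huv) hvs fun w hw => hn w (List.mem_cons_of_mem u hw)
    simp only [List.cons_append, List.map_cons, List.zip_cons_cons, List.sum_cons] at htail ⊢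
    rw [htail, arcDist_add_add_of_le a huv.le hv]
    omega

lemma inClockwiseOrder_map_add (a : ZMod n) {u v : ℕ} {us : List ℕ}
    (hus : (u :: v :: us).IsChain (· < ·)) (hn : ∀ w ∈ u :: v :: us, w < n) :
    InClockwiseOrder ((u :: v :: us).map fun w : ℕ => a + (w : ZMod n)) := by
  refine ⟨List.Nodup.map_on (fun w hw w' hw' h => ?_) (hus.pairwise.imp ne_of_lt), ?_⟩
  · exact CharP.natCast_injOn_Iio (ZMod n) n (hn w hw) (hn w' hw') (add_left_cancel h)
  · obtain ⟨huv, hvs⟩ := List.isChain_cons_cons.1 hus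
    have hv : v < n := hn v (by simp)
    have htail := sum_arcDist_zip_append a huv hvs fun w hw => hn w (List.mem_cons_of_mem u hw)
    rw [← List.map_rotate, List.rotate_cons_succ, List.rotate_zero]
    simp only [List.cons_append, List.map_cons, List.zip_cons_cons, List.sum_cons] at htail ⊢
    rw [htail, arcDist_add_add_of_le a huv.le hv]
    omega

lemma eq_add_one_or_of_mem_edgeSet_cycleGraph {a : ZMod n} {u v : ℕ} (huv : u < v) (hv : v < n)
    (h : s(a + u, a + v) ∈ (cycleGraph n).edgeSet) : v = u + 1 ∨ u = 0 ∧ v + 1 = n := by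
  have hinj := CharP.natCast_injOn_Iio (ZMod n) n
  rw [cycleGraph, SimpleGraph.edgeSet_fromEdgeSet] at h
  obtain ⟨⟨i, hi⟩, -⟩ := h
  obtain ⟨rfl, hw⟩ | ⟨hu, rfl⟩ := Sym2.eq_iff.1 hi
  · rw [add_assoc, add_right_inj, ← Nat.cast_add_one] at hw
    exact Or.inl (hinj hv (show u + 1 < n by omega) hw)
  · rw [add_assoc, add_right_inj, ← Nat.cast_add_one] at hu
    obtain hvn | hvn := (show v + 1 ≤ n from hv).eq_or_lt
    · rw [hvn, ZMod.natCast_self, ← Nat.cast_zero] at hu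
      exact Or.inr ⟨hinj (huv.trans hv) (show 0 < n by omega) hu, hvn⟩
    · have := hinj (huv.trans hv) hvn hu
      omega

lemma isShortcutTuple_add (a : ZMod n) {l x y z : ℕ} (hx : 1 < x) (hy : x + 1 < y)
    (hz : y + 1 < z) (hn : z + l + 1 < n) : IsShortcutTuple l a (a + x) (a + y) (a + z) := by
  have hchord {u v : ℕ} (huv : u + 1 < v) (hv : v < n) (hne : 0 < u ∨ v + 1 < n) :
      s(a + (u : ZMod n), a + (v : ZMod n)) ∉ (cycleGraph n).edgeSet := fun h => by
    have := eq_add_one_or_of_mem_edgeSet_cycleGraph (by omega) hv h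
    omega
  constructor
  · have horder := inClockwiseOrder_map_add a
      (u := 0) (v := 1) (us := [x, x + 1, y, y + 1, z, z + l + 1]) (by simp; omega)
      (by simp; omega)
    refine Or.inl ?_
    simpa [add_assoc] using horder
  · simp only [shortcutEdges, mem_insert, mem_singleton, forall_eq_or_imp, forall_eq]
    refine ⟨?_, ?_, ?_, ?_⟩
    · simpa using hchord (u := 0) (v := y) (by omega) (by omega) (by omega)
    · simpa using hchord (u := 1) (v := z) (by omega) (by omega) (by omega)
    · simpa [add_assoc] using
        hchord (u := x) (v := z + l + 1) (by omega) (by omega) (by omega)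
    · simpa [add_assoc] using
        hchord (u := x + 1) (v := y + 1) (by omega) (by omega) (by omega)

/-- The parameters `(a, a + 2 + x, a + 3 + m + y, a + 4 + 2 * m + z)` with `x, y, z < m`, which are
spread out in clockwise order. -/
def spreadTuple (m : ℕ) (p : ZMod n × Fin m × Fin m × Fin m) : Fin 4 → ZMod n :=
  ![p.1, p.1 + (2 + p.2.1 : ℕ), p.1 + (3 + m + p.2.2.1 : ℕ), p.1 + (4 + 2 * m + p.2.2.2 : ℕ)]

lemma spreadTuple_injective {m : ℕ} (hm : 3 * m + 4 < n) :
    Function.Injective (spreadTuple (n := n) m) := by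
  rintro ⟨a, x, y, z⟩ ⟨a', x', y', z'⟩ h
  have hinj {u v : ℕ} (hu : u < n) (hv : v < n) (huv : (u : ZMod n) = v) : u = v :=
    CharP.natCast_injOn_Iio (ZMod n) n hu hv huv
  obtain rfl : a = a' := congrFun h 0
  have hx := hinj (by omega) (by omega) (add_left_cancel (congrFun h 1))
  have hy := hinj (by omega) (by omega) (add_left_cancel (congrFun h 2))
  have hz := hinj (by omega) (by omega) (add_left_cancel (congrFun h 3))
  simp only [add_right_inj] at hx hy hz
  simp only [Prod.mk.injEq, true_and, Fin.ext_iff, hx, hy, hz]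

lemma isShortcutTuple_spreadTuple {l m : ℕ} (hm : 3 * m + l + 4 < n)
    (p : ZMod n × Fin m × Fin m × Fin m) :
    IsShortcutTuple l (spreadTuple m p 0) (spreadTuple m p 1) (spreadTuple m p 2)
      (spreadTuple m p 3) :=
  isShortcutTuple_add p.1 (by omega) (by omega) (by omega) (by omega)

variable [NeZero n]

lemma mul_pow_three_le_mul_card_shortcutFinset {l m : ℕ} (hm : 3 * m + l + 4 < n) :
    n * m ^ 3 ≤ 24 ^ 4 * #(shortcutFinset n l) := by
  have hmaps : ∀ t ∈ univ.image (spreadTuple (n := n) m),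
      univ.image (tupleEdge l t) ∈ shortcutFinset n l := by
    intro t ht
    obtain ⟨p, -, rfl⟩ := mem_image.1 ht
    exact mem_filter.2 ⟨mem_univ _, _, _, _, _, isShortcutTuple_spreadTuple hm p,
      image_tupleEdge l _⟩
  have hfiber : ∀ S ∈ shortcutFinset n l,
      #{t ∈ univ.image (spreadTuple (n := n) m) | univ.image (tupleEdge l t) = S} ≤ 24 ^ 4 :=
    fun S hS => (card_le_card (filter_subset_filter _ (subset_univ _))).trans
      (card_filter_image_tupleEdge_eq_le (card_le_four_of_mem_shortcutFinset hS))
  calc n * m ^ 3 = #(univ.image (spreadTuple (n := n) m)) := by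
        rw [card_image_of_injective _ (spreadTuple_injective (by omega))]
        simp only [card_univ, Fintype.card_prod, ZMod.card, Fintype.card_fin]
        ring
    _ ≤ 24 ^ 4 * #(shortcutFinset n l) :=
        card_le_mul_card_image_of_maps_to hmaps _ hfiber

lemma exists_pow_four_le_mul_card_shortcutFinset {δ : ℝ} (hδ : 0 < δ) :
    ∃ d > 0, ∀ (n l : ℕ) [NeZero n], l ≤ (1 - δ) * n → (shortcutFinset n l).Nonempty →
      (n : ℝ) ^ 4 ≤ d * #(shortcutFinset n l) := by
  refine ⟨(16 / δ) ^ 3 * 24 ^ 4 + (8 / δ) ^ 4, by positivity, fun n l _ hl hne => ?_⟩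
  have hone : (1 : ℝ) ≤ #(shortcutFinset n l) := mod_cast hne.card_pos
  have hn : (n : ℝ) = 8 / δ * (δ * n / 8) := by field_simp
  rw [add_mul]
  obtain hlarge | hsmall := le_or_gt 1 (δ * n / 8)
  · refine le_add_of_le_of_nonneg ?_ (mul_nonneg (by positivity) (Nat.cast_nonneg _))
    set m := ⌊δ * n / 8⌋₊
    have hm : (m : ℝ) ≤ δ * n / 8 := Nat.floor_le (by positivity)
    have hm' : δ * n / 8 < m + 1 := Nat.lt_floor_add_one _
    have hm1 : (1 : ℝ) ≤ m := mod_cast Nat.le_floor (by simpa using hlarge)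
    have hmn : 3 * m + l + 4 < n := by
      have : (3 * m + l + 4 : ℝ) < n := by linarith
      exact_mod_cast this
    have hcount : (n * m ^ 3 : ℝ) ≤ 24 ^ 4 * #(shortcutFinset n l) :=
      mod_cast mul_pow_three_le_mul_card_shortcutFinset hmn
    have hnm : (n : ℝ) ≤ 16 / δ * m := by
      rw [div_mul_eq_mul_div, le_div_iff₀ hδ]
      linarith
    calc (n : ℝ) ^ 4 = n * n ^ 3 := by ring
      _ ≤ n * (16 / δ * m) ^ 3 := by gcongr
      _ = (16 / δ) ^ 3 * (n * m ^ 3) := by ring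
      _ ≤ (16 / δ) ^ 3 * (24 ^ 4 * #(shortcutFinset n l)) := by gcongr
      _ = (16 / δ) ^ 3 * 24 ^ 4 * #(shortcutFinset n l) := (mul_assoc _ _ _).symm
  · refine le_add_of_nonneg_of_le (mul_nonneg (by positivity) (Nat.cast_nonneg _)) ?_
    calc (n : ℝ) ^ 4 ≤ (8 / δ) ^ 4 := by
          gcongr
          rw [hn]
          exact mul_le_of_le_one_right (by positivity) hsmall.le
      _ ≤ (8 / δ) ^ 4 * #(shortcutFinset n l) := le_mul_of_one_le_right (by positivity) hone

end LowerBound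

/-! ### Boundedness of the shortcut hypergraph -/

section Bounded

variable {n l i : ℕ} {q : ℝ}

lemma inv_pow_le_pow_of_one_le_sq_mul {x : ℝ} (hq : 0 < q) (hq1 : q ≤ 1) (hqx : 1 ≤ q ^ 2 * x)
    (k : ℕ) : q⁻¹ ^ k ≤ x ^ ((k + 1) / 2) := by
  calc q⁻¹ ^ k ≤ q⁻¹ ^ (2 * ((k + 1) / 2)) :=
        pow_le_pow_right₀ ((one_le_inv₀ hq).2 hq1) (by omega)
    _ = (q⁻¹ ^ 2) ^ ((k + 1) / 2) := pow_mul _ _ _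
    _ ≤ x ^ ((k + 1) / 2) := by
        gcongr
        rwa [inv_pow, inv_le_iff_one_le_mul₀' (by positivity)]

lemma pos_and_one_le_sq_mul_of_rpow_le (hn : n ≠ 0) (hq : (n : ℝ) ^ (-(1 / 2) : ℝ) ≤ q) :
    0 < q ∧ 1 ≤ q ^ 2 * n := by
  have hn0 : (0 : ℝ) < n := by positivity
  refine ⟨(Real.rpow_pos_of_pos hn0 _).trans_le hq, ?_⟩
  calc (1 : ℝ) = ((n : ℝ) ^ (-(1 / 2) : ℝ)) ^ 2 * n := by
        rw [← Real.rpow_mul_natCast hn0.le]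
        norm_num [Real.rpow_neg_one, hn]
    _ ≤ q ^ 2 * n := by gcongr

variable [NeZero n]

lemma inv_pow_mul_card_filter_shortcutFinset_le (hq : 0 < q) (hq1 : q ≤ 1) (hqn : 1 ≤ q ^ 2 * n)
    {S : Finset (Sym2 (ZMod n))} (hS : #S ≤ 4) {k : ℕ} (hk : k < 4) :
    q⁻¹ ^ k * #{T ∈ shortcutFinset n l | k < #(S ∩ T)} ≤ 24 ^ 4 * n ^ 2 := by
  have hn : (1 : ℝ) ≤ n := mod_cast NeZero.one_le
  calc q⁻¹ ^ k * #{T ∈ shortcutFinset n l | k < #(S ∩ T)}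
      ≤ n ^ ((k + 1) / 2) * (24 ^ 4 * n ^ (2 - k)) := by
        gcongr
        · exact inv_pow_le_pow_of_one_le_sq_mul hq hq1 hqn k
        · exact_mod_cast card_filter_lt_card_inter_shortcutFinset_le l k hS
    _ = 24 ^ 4 * n ^ ((k + 1) / 2 + (2 - k)) := by rw [pow_add]; ring
    _ ≤ 24 ^ 4 * n ^ 2 := by
        refine mul_le_mul_of_nonneg_left ?_ (by positivity)
        exact pow_le_pow_right₀ hn (by omega)

lemma card_knEdgeFinset_le (n : ℕ) [NeZero n] : #(knEdgeFinset n) ≤ n ^ 2 := by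
  rw [knEdgeFinset, ← Fintype.card_subtype, Sym2.card_subtype_not_diag, ZMod.card]
  exact Nat.choose_le_pow n 2

lemma ncard_knEdges (n : ℕ) [NeZero n] : (knEdges n).ncard = #(knEdgeFinset n) := by
  rw [← Set.ncard_coe_finset, knEdgeFinset, coe_filter_univ, knEdges]

lemma ncard_setOf_isShortcut (n l : ℕ) [NeZero n] :
    {S : Finset (Sym2 (ZMod n)) | IsShortcut l S}.ncard = #(shortcutFinset n l) := by
  rw [← Set.ncard_coe_finset, shortcutFinset, coe_filter_univ]

lemma shortcutDeg_eq_hyperDegree (l i : ℕ) (v : Sym2 (ZMod n)) (U : Finset (Sym2 (ZMod n))) :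
    shortcutDeg l i v U = hyperDegree (shortcutFinset n l) i v U := by
  rw [shortcutDeg, hyperDegree, shortcutFinset, filter_filter, ← Set.ncard_coe_finset,
    coe_filter_univ]

lemma shortcutDegSqExpectation_eq_randomSubsetExpect (n l i : ℕ) [NeZero n] (q : ℝ) :
    shortcutDegSqExpectation n l i q = randomSubsetExpect (knEdgeFinset n) q fun W =>
      ∑ v ∈ knEdgeFinset n, (hyperDegree (shortcutFinset n l) i v W : ℝ) ^ 2 := by
  simp only [shortcutDegSqExpectation, dif_neg (NeZero.ne n), randomSubsetExpect,
    shortcutDeg_eq_hyperDegree]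

lemma shortcutDegSqExpectation_le (hq : 0 < q) (hq1 : q ≤ 1) (hqn : 1 ≤ q ^ 2 * n) :
    shortcutDegSqExpectation n l i q ≤
      4 ^ 4 * 4 ^ 2 * (24 ^ 4 * n ^ 2) * q ^ (2 * i) * #(shortcutFinset n l) := by
  rw [shortcutDegSqExpectation_eq_randomSubsetExpect]
  exact_mod_cast randomSubsetExpect_sum_sq_hyperDegree_le hq hq1
    (fun S hS => card_le_four_of_mem_shortcutFinset hS) fun S hS k hk =>
      inv_pow_mul_card_filter_shortcutFinset_le hq hq1 hqn
        (card_le_four_of_mem_shortcutFinset hS) hk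

lemma shortcutDegSqExpectation_mul_card_le (hq : 0 < q) (hq1 : q ≤ 1) (hqn : 1 ≤ q ^ 2 * n) :
    shortcutDegSqExpectation n l i q * #(knEdgeFinset n) ≤
      4 ^ 4 * 4 ^ 2 * 24 ^ 4 * q ^ (2 * i) * (n ^ 4 * #(shortcutFinset n l)) := by
  calc shortcutDegSqExpectation n l i q * #(knEdgeFinset n)
      ≤ 4 ^ 4 * 4 ^ 2 * (24 ^ 4 * n ^ 2) * q ^ (2 * i) * #(shortcutFinset n l) * n ^ 2 := by
        gcongr
        · exact shortcutDegSqExpectation_le hq hq1 hqn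
        · exact_mod_cast card_knEdgeFinset_le n
    _ = 4 ^ 4 * 4 ^ 2 * 24 ^ 4 * q ^ (2 * i) * (n ^ 4 * #(shortcutFinset n l)) := by ring

lemma shortcutDegSqExpectation_of_knEdgeFinset_eq_empty (h : knEdgeFinset n = ∅) :
    shortcutDegSqExpectation n l i q = 0 := by
  simp [shortcutDegSqExpectation_eq_randomSubsetExpect, randomSubsetExpect, h]

end Bounded

theorem shortcut_hypergraph_bounded_general {δ : ℝ} (hδ : 0 < δ) :
    ∃ K : ℝ, 0 < K ∧ ∀ n l : ℕ, (l : ℝ) ≤ (1 - δ) * n →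
      ∀ i : ℕ, ∀ q : ℝ, (n : ℝ) ^ (-(1/2) : ℝ) ≤ q → q ≤ 1 →
        shortcutDegSqExpectation n l i q ≤
          K * q ^ (2 * i) *
            (({S : Finset (Sym2 (ZMod n)) | IsShortcut l S}.ncard : ℝ))^2 /
              ((knEdges n).ncard : ℝ) := by
  obtain ⟨d, hd, hcount⟩ := exists_pow_four_le_mul_card_shortcutFinset hδ
  refine ⟨4 ^ 4 * 4 ^ 2 * 24 ^ 4 * d, by positivity, fun n l hl i q hq hq1 => ?_⟩
  obtain rfl | hn := eq_or_ne n 0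
  · rw [shortcutDegSqExpectation, dif_pos rfl]
    have : 0 ≤ q := (Real.rpow_nonneg (Nat.cast_nonneg 0) _).trans hq
    positivity
  have : NeZero n := ⟨hn⟩
  obtain ⟨hq0, hqn⟩ := pos_and_one_le_sq_mul_of_rpow_le hn hq
  rw [ncard_knEdges, ncard_setOf_isShortcut]
  obtain hV | hV := (knEdgeFinset n).eq_empty_or_nonempty
  · simp [shortcutDegSqExpectation_of_knEdgeFinset_eq_empty hV, hV]
  have hcount' : (n : ℝ) ^ 4 * #(shortcutFinset n l) ≤ d * #(shortcutFinset n l) ^ 2 := by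
    obtain hH | hH := (shortcutFinset n l).eq_empty_or_nonempty
    · simp [hH]
    · rw [sq, ← mul_assoc]
      gcongr
      exact hcount n l hl hH
  rw [le_div_iff₀ (mod_cast hV.card_pos)]
  calc shortcutDegSqExpectation n l i q * #(knEdgeFinset n)
      ≤ 4 ^ 4 * 4 ^ 2 * 24 ^ 4 * q ^ (2 * i) * (n ^ 4 * #(shortcutFinset n l)) :=
        shortcutDegSqExpectation_mul_card_le hq0 hq1 hqn
    _ ≤ 4 ^ 4 * 4 ^ 2 * 24 ^ 4 * q ^ (2 * i) * (d * #(shortcutFinset n l) ^ 2) := by gcongr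
    _ = 4 ^ 4 * 4 ^ 2 * 24 ^ 4 * d * q ^ (2 * i) * #(shortcutFinset n l) ^ 2 := by ring

/-- There is a constant `K > 0` such that for all `n, l` with `0 ≤ 2l ≤ n` the hypergraph
`H_n^l` is `(K, n^(-1/2))`-bounded. -/
theorem shortcut_hypergraph_bounded :
    ∃ K : ℝ, 0 < K ∧ ∀ n l : ℕ, 2 * l ≤ n →
      ∀ i : ℕ, i ∈ ({1, 2, 3} : Set ℕ) →
      ∀ q : ℝ, (n : ℝ) ^ (-(1/2) : ℝ) ≤ q → q ≤ 1 →
        shortcutDegSqExpectation n l i q ≤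
          K * q ^ (2 * i) *
            (({S : Finset (Sym2 (ZMod n)) | IsShortcut l S}.ncard : ℝ))^2 /
              ((knEdges n).ncard : ℝ) := by
  obtain ⟨K, hK, hbound⟩ := shortcut_hypergraph_bounded_general (δ := 1 / 2) (by norm_num)
  refine ⟨K, hK, fun n l hl i _ => hbound n l ?_ i⟩
  linarith [show (2 * l : ℝ) ≤ n from mod_cast hl]
end

section
/- If p = p(n) ≥ C n^{-1/2} for some positive constant C, and β, ε' ∈ (0, 1/6), then G(n,p) asymptotically almost surely satisfies: for every labeling of its vertices with ℤ_n, there are at most n^{3/4} directions i ∈ ℤ_n such that E_i is not (β, ε', p)-good in G(n,p). -/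
/-!
Fix a labelling. Each bad direction contains a block (an interval or the middle part) of linear
size in which the number of edges deviates from its mean by a constant factor. If more than `m`
directions are bad, at least half of these blocks deviate upwards, or at least half downwards; since
different directions are edge-disjoint, the union of those blocks is a set of order `m n` pairs that
deviates as well, which by Chernoff's bound has probability `exp (-Ω(p m n))`. There are only
`n! (2 (n + 1)) ^ n = exp (O(n log n))` choices of a labelling, a set of directions and a block in
each, so the union bound succeeds whenever `p m / log n → ∞`. For `m = n ^ (3 / 4)` and
`p ≥ C n ^ (-1 / 2)` this holds because `p m ≥ C n ^ (1 / 4)`.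

The blocks have the expected sizes because distance from the centre orders `E_i` without ties: two
points of the circle equidistant from `0` agree up to sign, and this distance has no local minimum
other than `0`.
-/

open Filter Topology Classical

/-- `‖k‖`: the distance of `k` from `0` on the discrete circle `ZMod n`. -/
def circNorm {n : ℕ} (k : ZMod n) : ℕ := min k.val (-k).val

/-- `E_i`: the edges of `K_n` in direction `i`, i.e. pairs `{x,y}` with `x + y = i`. -/
def dirEdges (n : ℕ) (i : ZMod n) : Set (Sym2 (ZMod n)) :=
  {e | ∃ x y : ZMod n, e = s(x, y) ∧ x ≠ y ∧ x + y = i}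

/-- Two edges are crossing if their four endpoints are all distinct and lie
alternately on the cycle `C_n`. -/
def Crossing {n : ℕ} (e₁ e₂ : Sym2 (ZMod n)) : Prop :=
  ∃ x₁ y₁ x₂ y₂ : ZMod n, e₁ = s(x₁, y₁) ∧ e₂ = s(x₂, y₂) ∧
    InClockwiseOrder [x₁, x₂, y₁, y₂]

/-- A crossing is close if some pair of endpoints of the two edges is at circular
distance at most `βn`. -/
def CloseCrossing {n : ℕ} (β : ℝ) (e₁ e₂ : Sym2 (ZMod n)) : Prop :=
  Crossing e₁ e₂ ∧ ∃ a b : ZMod n, a ∈ e₁ ∧ b ∈ e₂ ∧ (circNorm (a - b) : ℝ) ≤ β * n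

/-- The centre point `i/2` (for odd `i.val` the floor `⌊i/2⌋`) of the direction `i`. -/
def dirCenter (n : ℕ) (i : ZMod n) : ZMod n := ((i.val / 2 : ℕ) : ZMod n)

/-- The distance of an edge from the centre point of its direction; within `E_i` this
realises the linear order `≤_i`. -/
def edgeRank (n : ℕ) (i : ZMod n) (e : Sym2 (ZMod n)) : ℕ :=
  Sym2.lift ⟨fun x y => min (circNorm (x - dirCenter n i)) (circNorm (y - dirCenter n i)),
    fun _ _ => min_comm _ _⟩ e

/-- The (1-indexed) position of an edge of `E_i` in the order `≤_i`. -/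
noncomputable def edgePos (n : ℕ) (i : ZMod n) (e : Sym2 (ZMod n)) : ℕ :=
  {e' ∈ dirEdges n i | edgeRank n i e' ≤ edgeRank n i e}.ncard

/-- `E_i^k`: the interval of `⌊βn⌋` consecutive edges of `(E_i, ≤_i)` starting from the
`k`-th smallest. -/
noncomputable def dirInterval (n : ℕ) (i : ZMod n) (β : ℝ) (k : ℕ) :
    Set (Sym2 (ZMod n)) :=
  {e ∈ dirEdges n i | k ≤ edgePos n i e ∧ edgePos n i e < k + ⌊β * n⌋₊}

/-- `M_i`: `E_i` without its leftmost and rightmost subintervals of length `⌊βn⌋`. -/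
noncomputable def dirMiddle (n : ℕ) (i : ZMod n) (β : ℝ) : Set (Sym2 (ZMod n)) :=
  {e ∈ dirEdges n i | ⌊β * n⌋₊ < edgePos n i e ∧
    edgePos n i e ≤ (dirEdges n i).ncard - ⌊β * n⌋₊}

/-- The direction `E_i` is `(β, ε', p)`-good in `G`. -/
def DirGood (n : ℕ) (β ε' p : ℝ) (G : SimpleGraph (ZMod n)) (i : ZMod n) : Prop :=
  (∀ k : ℕ, 1 ≤ k → (k : ℝ) ≤ (1/2 - β) * n →
    |((G.edgeSet ∩ dirInterval n i β k).ncard : ℝ) - β * n * p| ≤ ε' * (β * n * p)) ∧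
  |((G.edgeSet ∩ dirMiddle n i β).ncard : ℝ) - (1/2 - 2*β) * n * p| ≤
    ε' * ((1/2 - 2*β) * n * p)

/-- Probability that a graph drawn from the binomial random graph `G(n,p)` on the labeled
vertex set `ZMod n` satisfies the predicate `P` (junk value `0` for `n = 0`). -/
noncomputable def gnpProbZMod (n : ℕ) (p : ℝ) (P : SimpleGraph (ZMod n) → Prop) : ℝ :=
  if h : n = 0 then 0 else
    letI : NeZero n := ⟨h⟩
    ∑ G : SimpleGraph (ZMod n),
      if P G then p ^ G.edgeSet.ncard * (1 - p) ^ (n.choose 2 - G.edgeSet.ncard) else 0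

section RandomSet

open MeasureTheory Measure ProbabilityTheory unitInterval

variable {α : Type*}

/-- The deviation of the number of elements of `A` lying in `S` from its mean, when every element
lies in `S` with probability `p`. -/
noncomputable def deviation (p : ℝ) (A : Finset α) (S : Set α) : ℝ :=
  ∑ a ∈ A, ((if a ∈ S then 1 else 0) - p)

lemma deviation_eq_ncard_sub (p : ℝ) (A : Finset α) (S : Set α) :
    deviation p A S = (S ∩ A).ncard - p * A.card := by
  have hcard : (S ∩ A).ncard = (A.filter (· ∈ S)).card := by
    rw [← Set.ncard_coe_finset, Finset.coe_filter, Set.inter_comm]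
    rfl
  rw [deviation, Finset.sum_sub_distrib, Finset.sum_boole, Finset.sum_const, hcard, nsmul_eq_mul,
    mul_comm p]

lemma deviation_biUnion {ι : Type*} {T : Finset ι} {A : ι → Finset α}
    (hA : (T : Set ι).PairwiseDisjoint A) (p : ℝ) (S : Set α) :
    deviation p (T.biUnion A) S = ∑ i ∈ T, deviation p (A i) S :=
  Finset.sum_biUnion hA

lemma exp_le_one_add_add_sq {x : ℝ} (hx : |x| ≤ 1) : Real.exp x ≤ 1 + x + x ^ 2 := by
  linarith [abs_le.mp (Real.abs_exp_sub_one_sub_id_le hx)]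

lemma bernoulli_mgf_le {p t : ℝ} (hp : p ∈ Set.Icc 0 1) (ht : |t| ≤ 1) :
    p * Real.exp (t * (1 - p)) + (1 - p) * Real.exp (t * -p) ≤ Real.exp (p * t ^ 2) := by
  obtain ⟨hp0, hp1⟩ := hp
  have hle {q : ℝ} (hq : |q| ≤ 1) : |t * q| ≤ 1 := by
    simpa only [abs_mul, mul_one] using mul_le_mul ht hq (abs_nonneg q) zero_le_one
  have hsuccess := exp_le_one_add_add_sq (hle (q := 1 - p) (abs_le.mpr ⟨by linarith, by linarith⟩))
  have hfailure := exp_le_one_add_add_sq (hle (q := -p) (abs_le.mpr ⟨by linarith, by linarith⟩))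
  calc p * Real.exp (t * (1 - p)) + (1 - p) * Real.exp (t * -p)
      ≤ p * (1 + t * (1 - p) + (t * (1 - p)) ^ 2) + (1 - p) * (1 + t * -p + (t * -p) ^ 2) := by
        gcongr
    _ = 1 + p * (1 - p) * t ^ 2 := by ring
    _ ≤ p * t ^ 2 + 1 := by nlinarith [mul_nonneg (mul_nonneg hp0 hp0) (sq_nonneg t)]
    _ ≤ Real.exp (p * t ^ 2) := Real.add_one_le_exp _

variable {u : Set α} {p : I}

lemma map_mem_setBernoulli :
    setBer(u, p).map (fun S a => a ∈ S) =
      infinitePi fun a => toNNReal p • dirac (a ∈ u) + toNNReal (σ p) • dirac False := by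
  rw [setBernoulli_eq_map, map_map (by fun_prop) (by fun_prop)]
  exact Measure.map_id

lemma map_mem_apply_setBernoulli (a : α) :
    setBer(u, p).map (fun S => a ∈ S) =
      toNNReal p • dirac (a ∈ u) + toNNReal (σ p) • dirac False := by
  rw [← infinitePi_map_eval
    (fun a => toNNReal p • dirac (a ∈ u) + toNNReal (σ p) • dirac False) a,
    ← map_mem_setBernoulli, map_map (by fun_prop) (by fun_prop)]
  rfl

lemma iIndepFun_mem_setBernoulli : iIndepFun (fun (a : α) S => a ∈ S) setBer(u, p) := by
  rw [iIndepFun_iff_map_fun_eq_infinitePi_map (by fun_prop), map_mem_setBernoulli]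
  simp only [map_mem_apply_setBernoulli]

lemma measurable_indicator_mem_sub (a : α) (q : ℝ) :
    Measurable fun S : Set α => (if a ∈ S then 1 else 0) - q :=
  (measurable_from_top (f := fun P : Prop => (if P then 1 else 0) - q)).comp (by fun_prop)

lemma measurable_deviation (q : ℝ) (A : Finset α) : Measurable (deviation q A) :=
  Finset.measurable_sum A fun a _ => measurable_indicator_mem_sub a q

lemma mgf_indicator_mem_sub_le {a : α} (ha : a ∈ u) {t : ℝ} (ht : |t| ≤ 1) :
    mgf (fun S => (if a ∈ S then 1 else 0) - (p : ℝ)) setBer(u, p) t ≤ Real.exp (p * t ^ 2) := by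
  let X : Prop → ℝ := fun P => (if P then 1 else 0) - (p : ℝ)
  calc mgf (fun S => X (a ∈ S)) setBer(u, p) t
      = mgf X (setBer(u, p).map fun S => a ∈ S) t := by
        have : Measurable X := .of_discrete
        exact (mgf_map (X := X) (Y := fun S => a ∈ S) (μ := setBer(u, p)) (by fun_prop)
          (by fun_prop)).symm
    _ = p * Real.exp (t * (1 - p)) + (1 - p) * Real.exp (t * -p) := by
        rw [map_mem_apply_setBernoulli, mgf, integral_add_measure .of_finite .of_finite]
        simp [X, ha, integral_smul_nnreal_measure, NNReal.smul_def]
    _ ≤ Real.exp (p * t ^ 2) := bernoulli_mgf_le p.2 ht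

lemma mgf_deviation_le {A : Finset α} (hA : (A : Set α) ⊆ u) {t : ℝ} (ht : |t| ≤ 1) :
    mgf (deviation p A) setBer(u, p) t ≤ Real.exp (p * t ^ 2 * A.card) := by
  have hindep : iIndepFun (fun a S => (if a ∈ S then 1 else 0) - (p : ℝ)) setBer(u, p) :=
    iIndepFun_mem_setBernoulli.comp (fun _ P => (if P then 1 else 0) - (p : ℝ))
      fun _ => measurable_from_top
  calc mgf (deviation p A) setBer(u, p) t
      = ∏ a ∈ A, mgf (fun S => (if a ∈ S then 1 else 0) - (p : ℝ)) setBer(u, p) t := by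
        rw [← hindep.mgf_sum fun a => measurable_indicator_mem_sub a p]
        congr 1
        exact (Finset.sum_fn ..).symm
    _ ≤ ∏ _a ∈ A, Real.exp (p * t ^ 2) :=
        Finset.prod_le_prod (fun _ _ => mgf_nonneg) fun a ha => mgf_indicator_mem_sub_le (hA ha) ht
    _ = Real.exp (p * t ^ 2 * A.card) := by
        rw [Finset.prod_const, ← Real.exp_nat_mul, mul_comm]

lemma integrable_exp_mul_deviation (A : Finset α) (t q : ℝ) :
    Integrable (fun S => Real.exp (t * deviation q A S)) setBer(u, p) := by
  refine .of_bound (by have := measurable_deviation q A; fun_prop)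
    (Real.exp (|t| * (A.card * (1 + |q|)))) (ae_of_all _ fun S => ?_)
  have hdev : |deviation q A S| ≤ A.card * (1 + |q|) := by
    rw [← nsmul_eq_mul]
    refine (Finset.abs_sum_le_sum_abs ..).trans (Finset.sum_le_card_nsmul _ _ _ fun a _ => ?_)
    refine (abs_sub _ _).trans (add_le_add_left ?_ _)
    split <;> simp
  rw [Real.norm_eq_abs, Real.abs_exp, Real.exp_le_exp]
  exact (le_abs_self _).trans (by rw [abs_mul]; gcongr)

theorem measureReal_le_abs_deviation_le {A : Finset α} (hA : (A : Set α) ⊆ u) {δ : ℝ} (hδ : 0 ≤ δ) :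
    setBer(u, p).real {S | δ * (p * A.card) ≤ |deviation p A S|} ≤
      2 * Real.exp (-(min (δ / 2) 1 ^ 2 * (p * A.card))) := by
  set t := min (δ / 2) 1
  set μ : ℝ := p * A.card
  have hμ0 : 0 ≤ μ := mul_nonneg p.2.1 A.card.cast_nonneg
  have ht0 : 0 ≤ t := by positivity
  have hmgf {s : ℝ} (hs : |s| = t) :
      Real.exp (-(t * (δ * μ))) * mgf (deviation p A) setBer(u, p) s ≤ Real.exp (-(t ^ 2 * μ)) := by
    refine (mul_le_mul_of_nonneg_left (mgf_deviation_le hA (hs.trans_le (min_le_right ..)))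
      (Real.exp_nonneg _)).trans ?_
    rw [← Real.exp_add, Real.exp_le_exp, ← sq_abs s, hs]
    nlinarith [mul_nonneg hμ0 (mul_nonneg ht0 (sub_nonneg.2 (min_le_left (δ / 2) 1)))]
  have hupper : setBer(u, p).real {S | δ * μ ≤ deviation p A S} ≤ Real.exp (-(t ^ 2 * μ)) := by
    refine (measure_ge_le_exp_mul_mgf _ ht0 (integrable_exp_mul_deviation A t p)).trans ?_
    simpa only [neg_mul] using hmgf (abs_of_nonneg ht0)
  have hlower : setBer(u, p).real {S | deviation p A S ≤ -(δ * μ)} ≤ Real.exp (-(t ^ 2 * μ)) := by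
    refine (measure_le_le_exp_mul_mgf _ (neg_nonpos.2 ht0)
      (integrable_exp_mul_deviation A (-t) p)).trans ?_
    simpa only [neg_neg, mul_neg] using hmgf ((abs_neg t).trans (abs_of_nonneg ht0))
  calc setBer(u, p).real {S | δ * μ ≤ |deviation p A S|}
      = setBer(u, p).real
          ({S | δ * μ ≤ deviation p A S} ∪ {S | deviation p A S ≤ -(δ * μ)}) := by
        congr 1
        ext S
        simp only [Set.mem_ofPred_eq, le_abs', Set.mem_union, or_comm]
    _ ≤ _ := (measureReal_union_le _ _).trans (add_le_add hupper hlower)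
    _ = 2 * Real.exp (-(t ^ 2 * μ)) := (two_mul _).symm

lemma exists_half_le_card_forall_le_or_forall_le {ι R : Type*} [AddGroup R] [LinearOrder R]
    (T : Finset ι) (x y : ι → R) (hxy : ∀ i ∈ T, x i ≤ |y i|) :
    ∃ U ⊆ T, T.card ≤ 2 * U.card ∧ ((∀ i ∈ U, x i ≤ y i) ∨ ∀ i ∈ U, x i ≤ -y i) := by
  have hcard := T.card_filter_add_card_filter_not fun i => x i ≤ y i
  by_cases h : T.card ≤ 2 * (T.filter fun i => x i ≤ y i).card
  · exact ⟨_, T.filter_subset _, h, .inl fun i hi => (Finset.mem_filter.1 hi).2⟩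
  · refine ⟨T.filter fun i => ¬ x i ≤ y i, T.filter_subset _, by lia, .inr fun i hi => ?_⟩
    obtain ⟨hiT, hi⟩ := Finset.mem_filter.1 hi
    exact (le_abs.1 (hxy i hiT)).resolve_left hi

lemma exists_biUnion_deviation_ge {ι κ : Type*} [Nonempty κ] {B : ι → κ → Finset α}
    (hB : ∀ i j k l, i ≠ j → Disjoint (B i k) (B j l)) {q δ M : ℝ} (hM : 0 ≤ M)
    {S : Set α} {T : Finset ι}
    (hT : ∀ i ∈ T, ∃ k, M ≤ (B i k).card ∧ δ * (q * (B i k).card) ≤ |deviation q (B i k) S|) :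
    ∃ (U : Finset ι) (k : ι → κ), T.card / 2 * M ≤ (U.biUnion fun i => B i (k i)).card ∧
      δ * (q * (U.biUnion fun i => B i (k i)).card) ≤
        |deviation q (U.biUnion fun i => B i (k i)) S| := by
  choose! k hkM hkδ using hT
  obtain ⟨U, hUT, hcard, hsign⟩ := exists_half_le_card_forall_le_or_forall_le T _ _ hkδ
  have hdisj : (U : Set ι).PairwiseDisjoint fun i => B i (k i) :=
    fun i _ j _ hij => hB i j (k i) (k j) hij
  have hsum : ((U.biUnion fun i => B i (k i)).card : ℝ) = ∑ i ∈ U, ((B i (k i)).card : ℝ) := by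
    rw [Finset.card_biUnion hdisj, Nat.cast_sum]
  refine ⟨U, k, ?_, ?_⟩
  · have hhalf : (T.card : ℝ) / 2 ≤ U.card := by
      rw [div_le_iff₀' two_pos]
      exact_mod_cast hcard
    calc (T.card : ℝ) / 2 * M ≤ U.card * M := by gcongr
      _ ≤ ∑ i ∈ U, ((B i (k i)).card : ℝ) := by
        simpa only [nsmul_eq_mul] using U.card_nsmul_le_sum _ M fun i hi => hkM i (hUT hi)
      _ = _ := hsum.symm
  · rw [hsum, deviation_biUnion hdisj, Finset.mul_sum, Finset.mul_sum]
    rcases hsign with hpos | hneg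
    · exact (Finset.sum_le_sum hpos).trans (le_abs_self _)
    · refine (Finset.sum_le_sum hneg).trans ?_
      rw [Finset.sum_neg_distrib]
      exact neg_le_abs _

theorem measureReal_lt_ncard_deviating_le {ι κ : Type*} [Fintype ι] [Fintype κ] [Nonempty κ]
    {B : ι → κ → Finset α} (hBu : ∀ i k, (B i k : Set α) ⊆ u)
    (hB : ∀ i j k l, i ≠ j → Disjoint (B i k) (B j l)) {δ M : ℝ} (hδ : 0 ≤ δ) (hM : 0 ≤ M)
    (m : ℝ) :
    setBer(u, p).real {S | m < {i | ∃ k, M ≤ (B i k).card ∧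
        δ * (p * (B i k).card) ≤ |deviation p (B i k) S|}.ncard} ≤
      (2 * Fintype.card κ) ^ Fintype.card ι *
        (2 * Real.exp (-(min (δ / 2) 1 ^ 2 * (p * (m / 2 * M))))) := by
  let A (U : Finset ι) (k : ι → κ) : Finset α := U.biUnion fun i => B i (k i)
  let E (x : Finset ι × (ι → κ)) : Set (Set α) :=
    {S | m / 2 * M ≤ (A x.1 x.2).card ∧
      δ * (p * (A x.1 x.2).card) ≤ |deviation p (A x.1 x.2) S|}
  have hE (x) : setBer(u, p).real (E x) ≤
      2 * Real.exp (-(min (δ / 2) 1 ^ 2 * (p * (m / 2 * M)))) := by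
    by_cases hx : m / 2 * M ≤ (A x.1 x.2).card
    · refine (measureReal_mono fun S hS => hS.2).trans <|
        (measureReal_le_abs_deviation_le ?_ hδ).trans ?_
      · simp only [A, Finset.coe_biUnion, Set.iUnion_subset_iff]
        exact fun i _ => hBu i _
      · have := p.2.1
        gcongr
    · have : E x = ∅ := Set.eq_empty_of_forall_notMem fun S hS => hx hS.1
      rw [this, measureReal_empty]
      positivity
  let D (S : Set α) : Set ι :=
    {i | ∃ k, M ≤ (B i k).card ∧ δ * (p * (B i k).card) ≤ |deviation p (B i k) S|}
  calc setBer(u, p).real {S | m < (D S).ncard}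
      ≤ setBer(u, p).real (⋃ x, E x) := by
        refine measureReal_mono fun S hS => Set.mem_iUnion.2 ?_
        rw [Set.mem_ofPred_eq, Set.ncard_eq_toFinset_card'] at hS
        obtain ⟨U, k, hM', hdev⟩ := exists_biUnion_deviation_ge hB hM
          fun i (hi : i ∈ (D S).toFinset) => show i ∈ D S from Set.mem_toFinset.1 hi
        exact ⟨(U, k), le_trans (by gcongr) hM', hdev⟩
    _ ≤ ∑ x, setBer(u, p).real (E x) := measureReal_iUnion_fintype_le E
    _ ≤ ∑ _x : Finset ι × (ι → κ), 2 * Real.exp (-(min (δ / 2) 1 ^ 2 * (p * (m / 2 * M)))) :=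
        Finset.sum_le_sum fun x _ => hE x
    _ = _ := by
        rw [Finset.sum_const, nsmul_eq_mul, Finset.card_univ, Fintype.card_prod,
          Fintype.card_finset, Fintype.card_fun]
        push_cast
        rw [mul_pow]

end RandomSet

section RandomGraph

open MeasureTheory Measure ProbabilityTheory unitInterval SimpleGraph
open scoped Nat

variable {V W : Type*} {p : I}

lemma binomialRandom_real_edgeSet_le [Countable V] (s : Set (Set (Sym2 V))) :
    G(V, p).real {G | G.edgeSet ∈ s} ≤ setBer(Sym2.diagSetᶜ, p).real s := by
  rw [measureReal_def, binomialRandom_apply']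
  exact ENNReal.toReal_mono (measure_ne_top _ _) (measure_mono (Set.image_subset_iff.2 fun _ => id))

variable [Finite V]

instance : DiscreteMeasurableSpace (SimpleGraph V) where
  forall_measurableSet s := by
    rw [← measurableEmbedding_edgeSet.measurableSet_image]
    exact (s.toFinite.image _).measurableSet

lemma binomialRandom_map_relabel (e : V ≃ W) :
    G(V, p).map (fun G => G.map e.toEmbedding) = G(W, p) := by
  have : Finite W := .of_equiv V e
  have hinj : (fun G : SimpleGraph V => G.map e.toEmbedding).Injective :=
    SimpleGraph.map_injective e.toEmbedding
  refine Measure.ext_of_singleton fun G => ?_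
  obtain ⟨H, rfl⟩ : ∃ H : SimpleGraph V, H.map e.toEmbedding = G :=
    ⟨G.map e.symm.toEmbedding, by simp [SimpleGraph.map_map]⟩
  rw [map_apply .of_discrete .of_discrete, ← Set.image_singleton, hinj.preimage_image,
    Set.image_singleton, binomialRandom_singleton, binomialRandom_singleton, edgeSet_map,
    Set.ncard_image_of_injective _ e.toEmbedding.sym2Map.injective, Nat.card_congr e]

lemma binomialRandom_real_not_forall_relabel_le (Q : SimpleGraph V → Prop) :
    G(V, p).real {G | ¬ ∀ e : V ≃ V, Q (G.map e.toEmbedding)} ≤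
      (Nat.card V)! * G(V, p).real {G | ¬ Q G} := by
  cases nonempty_fintype V
  calc _ ≤ G(V, p).real (⋃ e : V ≃ V, {G | ¬ Q (G.map e.toEmbedding)}) :=
        measureReal_mono fun G hG => Set.mem_iUnion.2 (not_forall.1 hG)
    _ ≤ ∑ e : V ≃ V, G(V, p).real {G | ¬ Q (G.map e.toEmbedding)} := measureReal_iUnion_fintype_le _
    _ = ∑ _e : V ≃ V, G(V, p).real {G | ¬ Q G} := by
        refine Finset.sum_congr rfl fun e _ => ?_
        conv_rhs => rw [← binomialRandom_map_relabel e, map_measureReal_apply .of_discrete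
          .of_discrete]
        rfl
    _ = _ := by
        rw [Finset.sum_const, Finset.card_univ, Fintype.card_perm, nsmul_eq_mul,
          Nat.card_eq_fintype_card]

lemma gnpProbZMod_eq_binomialRandom_real (n : ℕ) [NeZero n] (P : SimpleGraph (ZMod n) → Prop) :
    gnpProbZMod n p P = G(ZMod n, p).real {G | P G} := by
  rw [gnpProbZMod, dif_neg (NeZero.ne n)]
  have hsum := sum_measureReal_singleton (μ := G(ZMod n, p)) (Finset.univ.filter P)
  rw [Finset.coe_filter_univ, Finset.sum_filter] at hsum
  rw [← hsum]
  refine Finset.sum_congr rfl fun G _ => ?_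
  rw [measureReal_def, binomialRandom_singleton, Nat.card_zmod]
  simp

end RandomGraph

section OrderPosition

variable {α β : Type*} [LinearOrder β] {S : Set α} {f : α → β}

lemma bijOn_ncard_setOf_le (hS : S.Finite) (hf : S.InjOn f) :
    Set.BijOn (fun x => {y ∈ S | f y ≤ f x}.ncard) S (Set.Icc 1 S.ncard) := by
  have hmono {x y} (hy : y ∈ S) (hxy : f x < f y) :
      {z ∈ S | f z ≤ f x}.ncard < {z ∈ S | f z ≤ f y}.ncard :=
    Set.ncard_lt_ncard ⟨fun z hz => ⟨hz.1, hz.2.trans hxy.le⟩,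
      fun h => hxy.not_ge (h ⟨hy, le_rfl⟩).2⟩ (hS.subset (Set.sep_subset ..))
  have hmaps : Set.MapsTo (fun x => {y ∈ S | f y ≤ f x}.ncard) S (Set.Icc 1 S.ncard) :=
    fun x hx => ⟨(Set.ncard_pos (hS.subset (Set.sep_subset ..))).2 ⟨x, hx, le_rfl⟩,
      Set.ncard_le_ncard (Set.sep_subset ..) hS⟩
  have hinj : S.InjOn fun x => {y ∈ S | f y ≤ f x}.ncard := by
    intro x hx y hy hxy
    refine hf hx hy ?_
    by_contra hne
    rcases lt_or_gt_of_ne hne with h | h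
    · exact (hmono hy h).ne hxy
    · exact (hmono hx h).ne' hxy
  refine ⟨hmaps, hinj, (Set.eq_of_subset_of_ncard_le hmaps.image_subset ?_).ge⟩
  rw [hinj.ncard_image, Set.ncard_eq_toFinset_card', Set.toFinset_Icc, Nat.card_Icc,
    Nat.add_sub_cancel]

lemma ncard_setOf_ncard_mem_Ico (hS : S.Finite) (hf : S.InjOn f) {a b : ℕ} (ha : 1 ≤ a)
    (hb : b ≤ S.ncard + 1) :
    {x ∈ S | {y ∈ S | f y ≤ f x}.ncard ∈ Set.Ico a b}.ncard = b - a := by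
  have hbij := bijOn_ncard_setOf_le hS hf
  set pos : α → ℕ := fun x => {y ∈ S | f y ≤ f x}.ncard
  have himage : pos '' (S ∩ pos ⁻¹' Set.Ico a b) = Set.Ico a b := by
    rw [Set.image_inter_preimage, hbij.image_eq, Set.inter_eq_right]
    rintro k ⟨hak, hkb⟩
    exact ⟨ha.trans hak, by lia⟩
  calc (S ∩ pos ⁻¹' Set.Ico a b).ncard
      = (Set.Ico a b).ncard := by
        rw [← (hbij.injOn.mono Set.inter_subset_left).ncard_image, himage]
    _ = b - a := by rw [Set.ncard_eq_toFinset_card', Set.toFinset_Ico, Nat.card_Ico]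

end OrderPosition

section Directions

variable {n : ℕ}

lemma circNorm_neg (k : ZMod n) : circNorm (-k) = circNorm k := by
  rw [circNorm, circNorm, neg_neg, min_comm]

lemma mem_dirEdges_mk {i x y : ZMod n} : s(x, y) ∈ dirEdges n i ↔ x ≠ y ∧ x + y = i := by
  refine ⟨?_, fun h => ⟨x, y, rfl, h⟩⟩
  rintro ⟨a, b, hab, hne, hi⟩
  rcases Sym2.eq_iff.1 hab with ⟨rfl, rfl⟩ | ⟨rfl, rfl⟩
  · exact ⟨hne, hi⟩
  · exact ⟨hne.symm, by rw [add_comm, hi]⟩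

lemma disjoint_dirEdges {i j : ZMod n} (hij : i ≠ j) : Disjoint (dirEdges n i) (dirEdges n j) := by
  refine Set.disjoint_left.2 fun e => Sym2.ind (fun x y hi hj => hij ?_) e
  rw [← (mem_dirEdges_mk.1 hi).2, (mem_dirEdges_mk.1 hj).2]

lemma dirEdges_subset_compl_diagSet (i : ZMod n) : dirEdges n i ⊆ Sym2.diagSetᶜ := by
  rintro _ ⟨x, y, rfl, hne, -⟩
  exact hne

lemma exists_closer_endpoint {i : ZMod n} {e : Sym2 (ZMod n)} (he : e ∈ dirEdges n i) :
    ∃ x y, e = s(x, y) ∧ x + y = i ∧ edgeRank n i e = circNorm (x - dirCenter n i) ∧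
      circNorm (x - dirCenter n i) ≤ circNorm (y - dirCenter n i) := by
  obtain ⟨x, y, rfl, -, hxy⟩ := he
  rcases le_total (circNorm (x - dirCenter n i)) (circNorm (y - dirCenter n i)) with h | h
  · exact ⟨x, y, rfl, hxy, min_eq_left h, h⟩
  · exact ⟨y, x, Sym2.eq_swap, (add_comm y x).trans hxy, min_eq_right h, h⟩

variable [NeZero n]

lemma eq_or_eq_neg_of_circNorm_eq {k l : ZMod n} (h : circNorm k = circNorm l) :
    k = l ∨ k = -l := by
  rw [circNorm, circNorm] at h
  rcases min_choice k.val (-k).val with hk | hk <;>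
    rcases min_choice l.val (-l).val with hl | hl <;>
      rw [hk, hl] at h <;> replace h := ZMod.val_injective n h
  · exact .inl h
  · exact .inr h
  · exact .inr (neg_eq_iff_eq_neg.1 h)
  · exact .inl (neg_injective h)

lemma circNorm_sub_one_lt {k : ZMod n} (hk : k ≠ 0) (h : k.val ≤ (-k).val) :
    circNorm (k - 1) < circNorm k := by
  have hpos : 0 < k.val := ZMod.val_pos.2 hk
  have hn : n ≠ 1 := by
    rintro rfl
    exact hk (Subsingleton.elim _ _)
  have hone : (1 : ZMod n).val = 1 := ZMod.val_one'' hn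
  have hval : (k - 1).val = k.val - 1 := by rw [ZMod.val_sub (hone ▸ hpos), hone]
  calc circNorm (k - 1) ≤ (k - 1).val := min_le_left _ _
    _ < k.val := by lia
    _ = circNorm k := (min_eq_left h).symm

lemma eq_zero_of_circNorm_le {k : ZMod n} (hsub : circNorm k ≤ circNorm (k - 1))
    (hadd : circNorm k ≤ circNorm (k + 1)) : k = 0 := by
  by_contra hk
  rcases le_total k.val (-k).val with h | h
  · exact (circNorm_sub_one_lt hk h).not_ge hsub
  · have := circNorm_sub_one_lt (neg_ne_zero.2 hk) (by rwa [neg_neg])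
    rw [← neg_add', circNorm_neg, circNorm_neg] at this
    exact this.not_ge hadd

lemma dirCenter_add_self (i : ZMod n) :
    dirCenter n i + dirCenter n i = i ∨ dirCenter n i + dirCenter n i + 1 = i := by
  have hcast : ((i.val : ℕ) : ZMod n) = i := ZMod.natCast_zmod_val i
  rcases Nat.even_or_odd' i.val with ⟨m, hm | hm⟩
  · left
    rw [dirCenter, ← Nat.cast_add, show i.val / 2 + i.val / 2 = i.val by lia, hcast]
  · right
    rw [dirCenter, ← Nat.cast_add, ← Nat.cast_add_one,
      show i.val / 2 + i.val / 2 + 1 = i.val by lia, hcast]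

lemma edgeRank_injOn (i : ZMod n) : (dirEdges n i).InjOn (edgeRank n i) := by
  intro e he e' he' hrank
  obtain ⟨x, y, rfl, hxy, hx, hle⟩ := exists_closer_endpoint he
  obtain ⟨x', y', rfl, hxy', hx', hle'⟩ := exists_closer_endpoint he'
  set c := dirCenter n i
  rcases eq_or_eq_neg_of_circNorm_eq (hx.symm.trans (hrank.trans hx')) with h | h
  · obtain rfl : x = x' := sub_left_injective h
    rw [add_left_cancel (hxy.trans hxy'.symm)]
  rcases dirCenter_add_self i with hc | hc
  · have hy : y = x' := by linear_combination hxy - h - hc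
    have hy' : y' = x := by linear_combination hxy' - h - hc
    rw [hy, hy', Sym2.eq_swap]
  · -- `x' - c = -(x - c)`, and neither neighbour of `x - c` is nearer to `0`.
    have hzero : x - c = 0 := by
      refine eq_zero_of_circNorm_le ?_ ?_
      · rwa [← circNorm_neg (x - c - 1),
          show -(x - c - 1) = y - c by linear_combination hc - hxy]
      · rw [show x - c + 1 = y' - c by linear_combination hc + h - hxy']
        rwa [h, circNorm_neg]
    have hx' : x' - c = 0 := neg_eq_zero.1 (h.symm.trans hzero)
    obtain rfl : x = x' := sub_left_injective (hzero.trans hx'.symm)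
    rw [add_left_cancel (hxy.trans hxy'.symm)]

lemma ncard_setOf_add_self_eq_le (i : ZMod n) : {x : ZMod n | x + x = i}.ncard ≤ 2 := by
  rcases Set.eq_empty_or_nonempty {x : ZMod n | x + x = i} with h | ⟨y, hy : y + y = i⟩
  · rw [h, Set.ncard_empty]
    exact zero_le_two
  suffices hsub : {x : ZMod n | x + x = i} ⊆ {y, y + (n / 2 : ℕ)} from
    (Set.ncard_le_ncard hsub).trans <| (Set.ncard_insert_le _ _).trans_eq <| by
      rw [Set.ncard_singleton]
  intro x (hx : x + x = i)
  have hself : -(x - y) = x - y := by linear_combination hy - hx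
  rcases (ZMod.neg_eq_self_iff _).1 hself with h | h
  · exact .inl (sub_eq_zero.1 h)
  · right
    rw [Set.mem_singleton_iff, ← sub_eq_iff_eq_add', ← ZMod.natCast_zmod_val (x - y)]
    congr 1
    lia

lemma two_mul_ncard_dirEdges_add (i : ZMod n) :
    2 * (dirEdges n i).ncard + {x : ZMod n | x + x = i}.ncard = n := by
  let N : Finset (ZMod n) := Finset.univ.filter fun x => ¬ x + x = i
  have hmaps : Set.MapsTo (fun x => s(x, i - x)) N (dirEdges n i).toFinset := by
    intro x hx
    rw [Set.coe_toFinset, mem_dirEdges_mk, Ne, eq_sub_iff_add_eq, add_sub_cancel]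
    exact ⟨(Finset.mem_filter.1 hx).2, rfl⟩
  have hfiber : ∀ e ∈ (dirEdges n i).toFinset, (N.filter fun x => s(x, i - x) = e).card = 2 := by
    intro e he
    obtain ⟨x, y, rfl, hne, rfl⟩ := Set.mem_toFinset.1 he
    rw [← Finset.card_pair hne]
    congr 1
    ext z
    simp only [N, Finset.mem_filter, Finset.mem_univ, true_and, Finset.mem_insert,
      Finset.mem_singleton, Sym2.eq_iff]
    constructor
    · rintro ⟨-, ⟨rfl, -⟩ | ⟨rfl, -⟩⟩
      exacts [.inl rfl, .inr rfl]
    · rintro (rfl | rfl)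
      · exact ⟨fun h => hne (add_left_cancel h), .inl ⟨rfl, add_sub_cancel_left ..⟩⟩
      · exact ⟨fun h => hne (add_right_cancel h).symm, .inr ⟨rfl, add_sub_cancel_right ..⟩⟩
  have hsum := Finset.card_eq_sum_card_fiberwise hmaps
  rw [Finset.sum_const_nat hfiber] at hsum
  rw [Set.ncard_eq_toFinset_card', Set.ncard_eq_toFinset_card', mul_comm, ← hsum, add_comm,
    Set.toFinset_ofPred, Finset.card_filter_add_card_filter_not, Finset.card_univ, ZMod.card]

end Directions

section Blocks

variable {n : ℕ} [NeZero n]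

lemma ncard_dirInterval (i : ZMod n) (β : ℝ) {k : ℕ} (hk : 1 ≤ k)
    (hk' : k + ⌊β * n⌋₊ ≤ (dirEdges n i).ncard + 1) :
    (dirInterval n i β k).ncard = ⌊β * n⌋₊ :=
  (ncard_setOf_ncard_mem_Ico (Set.toFinite _) (edgeRank_injOn i) hk hk').trans
    (Nat.add_sub_cancel_left ..)

lemma ncard_dirMiddle (i : ZMod n) (β : ℝ) :
    (dirMiddle n i β).ncard = (dirEdges n i).ncard - 2 * ⌊β * n⌋₊ := by
  have hmiddle : dirMiddle n i β = {e ∈ dirEdges n i | edgePos n i e ∈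
      Set.Ico (⌊β * n⌋₊ + 1) ((dirEdges n i).ncard - ⌊β * n⌋₊ + 1)} := by
    ext e
    simp only [dirMiddle, Set.mem_ofPred_eq, Set.mem_Ico, Nat.succ_le_iff, Nat.lt_succ_iff]
  have hcard := ncard_setOf_ncard_mem_Ico (Set.toFinite _) (edgeRank_injOn i)
    (a := ⌊β * n⌋₊ + 1) (b := (dirEdges n i).ncard - ⌊β * n⌋₊ + 1) (by lia) (by lia)
  exact (congrArg Set.ncard hmiddle).trans (hcard.trans (by lia))

lemma abs_ncard_dirInterval_sub_le (i : ZMod n) {β : ℝ} (hβ : 0 ≤ β) {k : ℕ} (hk : 1 ≤ k)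
    (hk' : (k : ℝ) ≤ (1 / 2 - β) * n) : |((dirInterval n i β k).ncard : ℝ) - β * n| ≤ 2 := by
  have hn := two_mul_ncard_dirEdges_add i
  have hself := ncard_setOf_add_self_eq_le i
  have hfloor := Nat.floor_le (mul_nonneg hβ n.cast_nonneg)
  have hroom : k + ⌊β * n⌋₊ ≤ (dirEdges n i).ncard + 1 := by
    have hn' : (n : ℝ) ≤ 2 * (dirEdges n i).ncard + 2 := by exact_mod_cast (by lia)
    rw [← Nat.cast_le (α := ℝ)]
    push_cast
    linarith
  rw [ncard_dirInterval i β hk hroom, abs_le]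
  constructor <;> linarith [Nat.lt_floor_add_one (β * n)]

lemma abs_ncard_dirMiddle_sub_le (i : ZMod n) {β : ℝ} (hβ : β ∈ Set.Icc 0 (1 / 4)) :
    |((dirMiddle n i β).ncard : ℝ) - (1 / 2 - 2 * β) * n| ≤ 2 := by
  have hn := two_mul_ncard_dirEdges_add i
  have hself := ncard_setOf_add_self_eq_le i
  have hn₁ : (n : ℝ) ≤ 2 * (dirEdges n i).ncard + 2 := by exact_mod_cast (by lia)
  have hn₂ : 2 * ((dirEdges n i).ncard : ℝ) ≤ n := by exact_mod_cast (by lia)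
  have hfloor := Nat.floor_le (mul_nonneg hβ.1 n.cast_nonneg)
  have hfloor' := Nat.lt_floor_add_one (β * n)
  have hmean : 0 ≤ (1 / 2 - 2 * β) * n := mul_nonneg (by linarith [hβ.2]) n.cast_nonneg
  rw [ncard_dirMiddle, abs_le]
  rcases le_total (dirEdges n i).ncard (2 * ⌊β * n⌋₊) with h | h
  · have h' : ((dirEdges n i).ncard : ℝ) ≤ 2 * ⌊β * n⌋₊ := by exact_mod_cast h
    rw [Nat.sub_eq_zero_of_le h, Nat.cast_zero]
    constructor <;> linarith
  · rw [Nat.cast_sub h]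
    push_cast
    constructor <;> linarith

/-- The sets of edges whose sizes decide whether the direction `i` is good: the middle part of
`E_i` (`none`) and its intervals (`some k`, where `k < n` covers all starting positions). -/
noncomputable def dirBlock (n : ℕ) [NeZero n] (β : ℝ) (i : ZMod n) :
    Option (Fin n) → Finset (Sym2 (ZMod n))
  | none => (dirMiddle n i β).toFinset
  | some k => (dirInterval n i β k).toFinset

lemma coe_dirBlock_subset (β : ℝ) (i : ZMod n) (k : Option (Fin n)) :
    (dirBlock n β i k : Set (Sym2 (ZMod n))) ⊆ dirEdges n i := by
  cases k <;> rw [dirBlock, Set.coe_toFinset] <;> exact Set.sep_subset ..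

lemma disjoint_dirBlock (β : ℝ) {i j : ZMod n} (hij : i ≠ j) (k l : Option (Fin n)) :
    Disjoint (dirBlock n β i k) (dirBlock n β j l) :=
  Finset.disjoint_coe.1 <|
    (disjoint_dirEdges hij).mono (coe_dirBlock_subset β i k) (coe_dirBlock_subset β j l)

lemma half_le_and_le_abs_sub {ε q X F μ : ℝ} (hε : 0 < ε) (hq : 0 ≤ q) (hμ : 4 + 4 / ε ≤ μ)
    (hF : |F - μ| ≤ 2) (hX : ε * (μ * q) < |X - μ * q|) :
    μ / 2 ≤ F ∧ ε / 2 * (q * F) ≤ |X - q * F| := by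
  obtain ⟨hF₁, hF₂⟩ := abs_le.1 hF
  have hεμ : 4 * ε + 4 ≤ ε * μ := by
    have := mul_le_mul_of_nonneg_left hμ hε.le
    rwa [mul_add, mul_div_cancel₀ _ hε.ne', mul_comm ε 4] at this
  have hdiff : |q * F - μ * q| ≤ 2 * q := by
    rw [mul_comm μ, ← mul_sub, abs_mul, abs_of_nonneg hq, mul_comm 2]
    gcongr
  refine ⟨by linarith [div_pos four_pos hε], ?_⟩
  calc ε / 2 * (q * F) ≤ ε / 2 * (q * (μ + 2)) := by gcongr; linarith
    _ ≤ ε * (μ * q) - 2 * q := by nlinarith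
    _ ≤ |X - μ * q| - |q * F - μ * q| := sub_le_sub hX.le hdiff
    _ ≤ |X - q * F| := by
      simpa only [sub_sub_sub_cancel_right] using abs_sub_abs_le_abs_sub (X - μ * q) (q * F - μ * q)

lemma exists_dirBlock_deviation_ge {β ε q : ℝ} (hβ : β ∈ Set.Ioo 0 (1 / 4)) (hε : 0 < ε)
    (hq : 0 ≤ q) (hn : 4 + 4 / ε ≤ min β (1 / 2 - 2 * β) * n) {G : SimpleGraph (ZMod n)}
    {i : ZMod n} (hG : ¬ DirGood n β ε q G i) :
    ∃ k, min β (1 / 2 - 2 * β) * n / 2 ≤ (dirBlock n β i k).card ∧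
      ε / 2 * (q * (dirBlock n β i k).card) ≤ |deviation q (dirBlock n β i k) G.edgeSet| := by
  simp only [DirGood, not_and_or, not_forall, not_le] at hG
  have hn0 : (0 : ℝ) < n := Nat.cast_pos.2 (NeZero.pos n)
  rcases hG with ⟨k, hk, hk', hX⟩ | hX
  · have hkn : k < n := by
      rw [← Nat.cast_lt (α := ℝ)]
      nlinarith [hβ.1]
    have hμ : min β (1 / 2 - 2 * β) * n ≤ β * n := by
      gcongr
      exact min_le_left ..
    have := half_le_and_le_abs_sub hε hq (hn.trans hμ)
      (abs_ncard_dirInterval_sub_le i hβ.1.le hk hk') hX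
    refine ⟨some ⟨k, hkn⟩, ?_⟩
    rw [deviation_eq_ncard_sub, dirBlock, Set.coe_toFinset, ← Set.ncard_eq_toFinset_card']
    exact ⟨by linarith [this.1], this.2⟩
  · have hμ : min β (1 / 2 - 2 * β) * n ≤ (1 / 2 - 2 * β) * n := by
      gcongr
      exact min_le_right ..
    have := half_le_and_le_abs_sub hε hq (hn.trans hμ)
      (abs_ncard_dirMiddle_sub_le i ⟨hβ.1.le, hβ.2.le⟩) hX
    refine ⟨none, ?_⟩
    rw [deviation_eq_ncard_sub, dirBlock, Set.coe_toFinset, ← Set.ncard_eq_toFinset_card']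
    exact ⟨by linarith [this.1], this.2⟩

end Blocks

section Asymptotics

open MeasureTheory ProbabilityTheory SimpleGraph
open scoped Nat

lemma one_sub_gnpProbZMod_le {n : ℕ} [NeZero n] {q : ℝ} (hq : q ∈ Set.Icc 0 1) {β ε : ℝ}
    (hβ : β ∈ Set.Ioo 0 (1 / 4)) (hε : 0 < ε) (hn : 4 + 4 / ε ≤ min β (1 / 2 - 2 * β) * n)
    (m : ℝ) :
    1 - gnpProbZMod n q (fun G => ∀ σ : ZMod n ≃ ZMod n,
        ({i | ¬ DirGood n β ε q (G.map σ.toEmbedding) i}.ncard : ℝ) ≤ m) ≤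
      n ! * ((2 * (n + 1)) ^ n *
        (2 * Real.exp (-(min (ε / 4) 1 ^ 2 * min β (1 / 2 - 2 * β) / 4 * (q * m * n))))) := by
  lift q to unitInterval using hq
  set γ := min β (1 / 2 - 2 * β)
  have hγ0 : 0 ≤ γ := le_min hβ.1.le (by linarith [hβ.2])
  let Q (G : SimpleGraph (ZMod n)) : Prop := ({i | ¬ DirGood n β ε q G i}.ncard : ℝ) ≤ m
  let bad (S : Set (Sym2 (ZMod n))) : Set (ZMod n) :=
    {i | ∃ k, γ * n / 2 ≤ (dirBlock n β i k).card ∧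
      ε / 2 * (q * (dirBlock n β i k).card) ≤ |deviation q (dirBlock n β i k) S|}
  have hQ : G(ZMod n, q).real {G | ¬ Q G} ≤
      setBer(Sym2.diagSetᶜ, q).real {S | m < (bad S).ncard} := by
    refine (measureReal_mono fun G hG => ?_).trans (binomialRandom_real_edgeSet_le _)
    refine (not_le.1 hG).trans_le (Nat.cast_le.2 (Set.ncard_le_ncard fun i hi => ?_))
    exact exists_dirBlock_deviation_ge hβ hε q.2.1 hn hi
  have hbad : setBer(Sym2.diagSetᶜ, q).real {S | m < (bad S).ncard} ≤
      (2 * (n + 1)) ^ n * (2 * Real.exp (-(min (ε / 4) 1 ^ 2 * γ / 4 * (q * m * n)))) := by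
    refine (measureReal_lt_ncard_deviating_le
      (fun i k => (coe_dirBlock_subset β i k).trans (dirEdges_subset_compl_diagSet i))
      (fun _ _ k l hij => disjoint_dirBlock β hij k l) (by positivity) (by positivity)
      m).trans_eq ?_
    rw [Fintype.card_option, Fintype.card_fin, ZMod.card, div_div]
    push_cast
    ring_nf
  calc _ = G(ZMod n, q).real {G | ¬ ∀ σ : ZMod n ≃ ZMod n, Q (G.map σ.toEmbedding)} := by
        rw [gnpProbZMod_eq_binomialRandom_real]
        exact (probReal_compl_eq_one_sub .of_discrete).symm
    _ ≤ n ! * G(ZMod n, q).real {G | ¬ Q G} := by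
        simpa only [Nat.card_zmod] using binomialRandom_real_not_forall_relabel_le Q
    _ ≤ _ := mul_le_mul_of_nonneg_left (hQ.trans hbad) (by positivity)

lemma factorial_mul_two_mul_succ_pow_le {n : ℕ} (hn : 3 ≤ n) :
    n ! * ((2 * (n + 1)) ^ n * 2) ≤ n ^ (4 * n) :=
  calc n ! * ((2 * (n + 1)) ^ n * 2) ≤ n ^ n * ((n ^ 2) ^ n * n ^ n) := by
        gcongr
        · exact Nat.factorial_le_pow n
        · nlinarith
        · exact (show 2 ≤ n by lia).trans (Nat.le_self_pow (by lia) n)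
    _ = n ^ (4 * n) := by ring

lemma tendsto_factorial_mul_pow_mul_exp_neg {a : ℝ} (ha : 0 < a) {x : ℕ → ℝ}
    (hx : Tendsto (fun n => x n / Real.log n) atTop atTop) :
    Tendsto (fun n : ℕ => n ! * ((2 * (n + 1)) ^ n * (2 * Real.exp (-(a * (x n * n))))))
      atTop (𝓝 0) := by
  have hlog : Tendsto (fun n : ℕ => (n : ℝ) * Real.log n) atTop atTop :=
    tendsto_natCast_atTop_atTop.atTop_mul_atTop₀
      (Real.tendsto_log_atTop.comp tendsto_natCast_atTop_atTop)
  refine squeeze_zero' (.of_forall fun n => by positivity) ?_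
    (Real.tendsto_exp_neg_atTop_nhds_zero.comp hlog)
  filter_upwards [hx.eventually_ge_atTop (5 / a), eventually_ge_atTop 3] with n hxn hn
  have hlogpos : 0 < Real.log n := Real.log_pos (by exact_mod_cast (by lia : 1 < n))
  have hxa : 5 * Real.log n ≤ a * x n := by
    rwa [div_le_div_iff₀ ha hlogpos, mul_comm (x n)] at hxn
  calc (n ! * ((2 * (n + 1)) ^ n * (2 * Real.exp (-(a * (x n * n))))) : ℝ)
      = (n ! * ((2 * (n + 1)) ^ n * 2) : ℕ) * Real.exp (-(a * (x n * n))) := by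
        push_cast
        ring
    _ ≤ (n ^ (4 * n) : ℕ) * Real.exp (-(5 * Real.log n * n)) := by
        gcongr ?_ * Real.exp (-?_)
        · exact_mod_cast factorial_mul_two_mul_succ_pow_le hn
        · rw [← mul_assoc]
          gcongr
    _ = Real.exp ((4 * n : ℕ) * Real.log n) * Real.exp (-(5 * Real.log n * n)) := by
        rw [Real.exp_nat_mul, Real.exp_log (by positivity), Nat.cast_pow]
    _ = Real.exp (-(n * Real.log n)) := by
        rw [← Real.exp_add]
        push_cast
        ring_nf

lemma tendsto_rpow_div_log_atTop {r : ℝ} (hr : 0 < r) :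
    Tendsto (fun x => x ^ r / Real.log x) atTop atTop := by
  have hzero : Tendsto (fun x => Real.log x / x ^ r) atTop (𝓝[>] 0) := by
    refine tendsto_nhdsWithin_iff.2 ⟨(isLittleO_log_rpow_atTop hr).tendsto_div_nhds_zero, ?_⟩
    filter_upwards [eventually_gt_atTop 1] with x hx
    exact div_pos (Real.log_pos hx) (Real.rpow_pos_of_pos (zero_lt_one.trans hx) r)
  refine hzero.inv_tendsto_nhdsGT_zero.congr fun x => ?_
  rw [Pi.inv_apply, inv_div]

lemma tendsto_mul_rpow_three_quarters_div_log {C : ℝ} (hC : 0 < C) {p : ℕ → ℝ}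
    (hp : ∀ n : ℕ, C * (n : ℝ) ^ (-(1 / 2) : ℝ) ≤ p n) :
    Tendsto (fun n : ℕ => p n * (n : ℝ) ^ ((3 : ℝ) / 4) / Real.log n) atTop atTop := by
  have hquarter := ((tendsto_rpow_div_log_atTop (r := 1 / 4) (by norm_num)).comp
    tendsto_natCast_atTop_atTop).const_mul_atTop hC
  refine tendsto_atTop_mono' _ ?_ hquarter
  filter_upwards [eventually_ge_atTop 1] with n hn
  have hn0 : (0 : ℝ) < n := by exact_mod_cast hn
  calc C * ((n : ℝ) ^ ((1 : ℝ) / 4) / Real.log n)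
      = C * (n : ℝ) ^ (-(1 / 2) : ℝ) * (n : ℝ) ^ ((3 : ℝ) / 4) / Real.log n := by
        rw [mul_assoc, ← Real.rpow_add hn0, ← mul_div_assoc]
        norm_num
    _ ≤ p n * (n : ℝ) ^ ((3 : ℝ) / 4) / Real.log n := by
        gcongr
        exact hp n

theorem aas_few_bad_directions_general {p m : ℕ → ℝ} (hp : ∀ n, p n ∈ Set.Icc 0 1)
    (hpm : Tendsto (fun n => p n * m n / Real.log n) atTop atTop) {β ε : ℝ}
    (hβ : β ∈ Set.Ioo 0 (1 / 4)) (hε : 0 < ε) :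
    Tendsto
      (fun n => gnpProbZMod n (p n) (fun G => ∀ σ : ZMod n ≃ ZMod n,
        ({i | ¬ DirGood n β ε (p n) (G.map σ.toEmbedding) i}.ncard : ℝ) ≤ m n))
      atTop (𝓝 1) := by
  have hγ : 0 < min β (1 / 2 - 2 * β) := lt_min hβ.1 (by linarith [hβ.2])
  have hlarge : ∀ᶠ n : ℕ in atTop, 4 + 4 / ε ≤ min β (1 / 2 - 2 * β) * n :=
    (tendsto_natCast_atTop_atTop.const_mul_atTop hγ).eventually_ge_atTop _
  have hfail := tendsto_factorial_mul_pow_mul_exp_neg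
    (a := min (ε / 4) 1 ^ 2 * min β (1 / 2 - 2 * β) / 4) (by positivity) hpm
  refine tendsto_of_tendsto_of_tendsto_of_le_of_le' (sub_zero (1 : ℝ) ▸ hfail.const_sub 1)
    tendsto_const_nhds ?_ ?_
  · filter_upwards [hlarge, eventually_ge_atTop 1] with n hn hn1
    have : NeZero n := ⟨by lia⟩
    linarith [one_sub_gnpProbZMod_le (hp n) hβ hε hn (m n)]
  · filter_upwards [eventually_ge_atTop 1] with n hn1
    have : NeZero n := ⟨by lia⟩
    exact (gnpProbZMod_eq_binomialRandom_real (p := ⟨p n, hp n⟩) n _).trans_le measureReal_le_one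

end Asymptotics

/-- If `p(n) ≥ C·n^(-1/2)` with `C > 0` and `β, ε' ∈ (0, 1/6)`, then a.a.s. for every
labeling of the vertices of `G(n,p)` with `ZMod n` there are at most `n^(3/4)` directions
`i` that are not `(β, ε', p)`-good. -/
theorem aas_few_bad_directions (C : ℝ) (hC : 0 < C) (p : ℕ → ℝ)
    (hp : ∀ n : ℕ, C * (n : ℝ) ^ (-(1/2) : ℝ) ≤ p n) (hp1 : ∀ n : ℕ, p n ≤ 1)
    (β ε' : ℝ) (hβ : β ∈ Set.Ioo (0 : ℝ) (1/6)) (hε' : ε' ∈ Set.Ioo (0 : ℝ) (1/6)) :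
    Filter.Tendsto
      (fun n : ℕ => gnpProbZMod n (p n) (fun G =>
        ∀ σ : ZMod n ≃ ZMod n,
          ({i : ZMod n | ¬ DirGood n β ε' (p n) (G.map σ.toEmbedding) i}.ncard : ℝ) ≤
            (n : ℝ) ^ ((3 : ℝ)/4)))
      Filter.atTop (nhds 1) :=
  aas_few_bad_directions_general (fun n => ⟨le_trans (by positivity) (hp n), hp1 n⟩)
    (tendsto_mul_rpow_three_quarters_div_log hC hp) ⟨hβ.1, hβ.2.trans (by norm_num)⟩ hε'.1
end
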